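/- arXiv:1004.2484 — 10 statements merged into one kernel-verified Lean document; each statement's English description precedes it below -/
import Mathlib

section
/- Call r ∈ R_Φ(P_T) a boundary point of R_Φ(P_T) if (1+δ)·r ∉ R_Φ(P_T) for every δ > 0. Then every boundary point of R_Φ(P_T) is a strong Pareto optimum: there is no r' ∈ R_Φ(P_T) with r'_l ≥ r_l for all l ∈ {1,…,L} and r'_k > r_k for some k. -/
open Matrix ComplexOrder

noncomputable section

/-- Forward interference-plus-noise covariance of link `l` in a B-MAC network. -/
def bmacOmega {L : ℕ} (m n : Fin L → ℕ)
    (H : ∀ l k : Fin L, Matrix (Fin (n l)) (Fin (m k)) ℂ)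
    (Φ : Fin L → Fin L → ℝ)
    (S : ∀ k : Fin L, Matrix (Fin (m k)) (Fin (m k)) ℂ) (l : Fin L) :
    Matrix (Fin (n l)) (Fin (n l)) ℂ :=
  1 + ∑ k : Fin L, Φ l k • (H l k * S k * (H l k)ᴴ)

/-- Forward rate of link `l`. -/
def bmacRate {L : ℕ} (m n : Fin L → ℕ)
    (H : ∀ l k : Fin L, Matrix (Fin (n l)) (Fin (m k)) ℂ)
    (Φ : Fin L → Fin L → ℝ)
    (S : ∀ k : Fin L, Matrix (Fin (m k)) (Fin (m k)) ℂ) (l : Fin L) : ℝ :=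
  Real.log ((bmacOmega m n H Φ S l + H l l * S l * (H l l)ᴴ).det.re)
    - Real.log ((bmacOmega m n H Φ S l).det.re)

/-- Achievable rate region under a sum power constraint. -/
def bmacRegion {L : ℕ} (m n : Fin L → ℕ)
    (H : ∀ l k : Fin L, Matrix (Fin (n l)) (Fin (m k)) ℂ)
    (Φ : Fin L → Fin L → ℝ) (PT : ℝ) : Set (Fin L → ℝ) :=
  {r | (∀ l, 0 ≤ r l) ∧
    ∃ S : ∀ k : Fin L, Matrix (Fin (m k)) (Fin (m k)) ℂ,
      (∀ k, (S k).PosSemidef) ∧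
      (∑ l, (Matrix.trace (S l)).re) ≤ PT ∧
      ∀ l, r l ≤ bmacRate m n H Φ S l}

namespace Matrix

theorem PosSemidef.real_smul {ι : Type*} {A : Matrix ι ι ℂ} (hA : A.PosSemidef) {c : ℝ} (hc : 0 ≤ c) :
    (c • A).PosSemidef := hA.smul hc

variable {ι : Type*} [Fintype ι] [DecidableEq ι]

/-- A positive definite matrix is congruent to the identity, and the congruence carries positive
semidefinite matrices to positive semidefinite matrices. -/
theorem PosDef.exists_congr_one {B : Matrix ι ι ℂ} (hB : B.PosDef) :
    ∃ R : Matrix ι ι ℂ, R.det ≠ 0 ∧ B = Rᴴ * 1 * R ∧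
      ∀ X : Matrix ι ι ℂ, X.PosSemidef → ∃ Y : Matrix ι ι ℂ, Y.PosSemidef ∧ X = Rᴴ * Y * R := by
  obtain ⟨R, rfl⟩ : ∃ R : Matrix ι ι ℂ, B = Rᴴ * R := by
    open scoped MatrixOrder in
    exact CStarAlgebra.nonneg_iff_eq_star_mul_self.mp hB.posSemidef.nonneg
  have hdet : R.det ≠ 0 := by
    intro h
    have := hB.det_pos
    simp [h] at this
  refine ⟨R, hdet, by simp, fun X hX => ⟨_, hX.conjTranspose_mul_mul_same R⁻¹, ?_⟩⟩
  have hu : IsUnit R.det := hdet.isUnit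
  have hu' : IsUnit Rᴴ.det := by simpa [det_conjTranspose] using hdet
  rw [conjTranspose_nonsing_inv]
  simp only [Matrix.mul_assoc, nonsing_inv_mul R hu, Matrix.mul_one]
  rw [← Matrix.mul_assoc, mul_nonsing_inv _ hu', Matrix.one_mul]

theorem re_det_conjTranspose_mul_mul (R Y : Matrix ι ι ℂ) :
    (Rᴴ * Y * R).det.re = Complex.normSq R.det * Y.det.re := by
  rw [det_mul, det_mul, det_conjTranspose, mul_right_comm]
  have : star R.det * R.det = (Complex.normSq R.det : ℂ) := Complex.normSq_eq_conj_mul_self.symm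
  rw [this, Complex.re_ofReal_mul]

theorem PosDef.re_det_pos {A : Matrix ι ι ℂ} (hA : A.PosDef) : 0 < A.det.re :=
  (Complex.lt_def.mp hA.det_pos).1

theorem PosDef.im_det {A : Matrix ι ι ℂ} (hA : A.PosDef) : A.det.im = 0 :=
  (Complex.lt_def.mp hA.det_pos).2.symm

theorem re_det_real_smul (c : ℝ) (A : Matrix ι ι ℂ) :
    (c • A).det.re = c ^ Fintype.card ι * A.det.re := by
  have : c • A = (c : ℂ) • A := by ext; simp
  rw [this, det_smul, ← Complex.ofReal_pow, Complex.re_ofReal_mul]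

theorem IsHermitian.re_det_one_add_smul {Y : Matrix ι ι ℂ} (hY : Y.IsHermitian) (u : ℝ) :
    (1 + u • Y).det.re = ∏ i, (1 + u * hY.eigenvalues i) := by
  have key : 1 + u • Y = Unitary.conjStarAlgAut ℂ _ hY.eigenvectorUnitary
      (diagonal fun i => ((1 + u * hY.eigenvalues i : ℝ) : ℂ)) := by
    have hd : (diagonal fun i => ((1 + u * hY.eigenvalues i : ℝ) : ℂ)) =
        1 + (u : ℂ) • diagonal (RCLike.ofReal ∘ hY.eigenvalues) := by
      ext i j
      by_cases h : i = j
      · subst h; simp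
      · simp [h]
    rw [hd, map_add, map_one, map_smul, ← hY.spectral_theorem]
    congr 1
  rw [key, Unitary.conjStarAlgAut_apply, det_mul_comm, ← Matrix.mul_assoc, Unitary.coe_star_mul_self,
    Matrix.one_mul, det_diagonal, ← Complex.ofReal_prod, Complex.ofReal_re]

theorem PosSemidef.exists_smul_one_sub {J : Matrix ι ι ℂ} (hJ : J.PosSemidef) :
    ∃ c : ℝ, 0 ≤ c ∧ (c • (1 : Matrix ι ι ℂ) - J).PosSemidef := by
  refine ⟨∑ i, hJ.1.eigenvalues i, Finset.sum_nonneg fun i _ => hJ.eigenvalues_nonneg i, ?_⟩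
  set c := ∑ i, hJ.1.eigenvalues i with hc
  have key : c • (1 : Matrix ι ι ℂ) - J = Unitary.conjStarAlgAut ℂ _ hJ.1.eigenvectorUnitary
      (diagonal fun i => ((c - hJ.1.eigenvalues i : ℝ) : ℂ)) := by
    have hd : (diagonal fun i => ((c - hJ.1.eigenvalues i : ℝ) : ℂ)) =
        (c : ℂ) • 1 - diagonal (RCLike.ofReal ∘ hJ.1.eigenvalues) := by
      ext i j
      by_cases h : i = j
      · subst h; simp
      · simp [h]
    rw [hd, map_sub, map_smul, map_one, ← hJ.1.spectral_theorem]
    congr 1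
  rw [key, Unitary.conjStarAlgAut_apply]
  refine PosSemidef.mul_mul_conjTranspose_same (PosSemidef.diagonal fun i => ?_) _
  have : hJ.1.eigenvalues i ≤ c :=
    Finset.single_le_sum (fun i _ => hJ.eigenvalues_nonneg i) (Finset.mem_univ i)
  simpa using this

theorem PosDef.re_det_le_add {B X : Matrix ι ι ℂ} (hB : B.PosDef) (hX : X.PosSemidef) :
    B.det.re ≤ (B + X).det.re := by
  obtain ⟨R, hR, rfl, hc⟩ := hB.exists_congr_one
  obtain ⟨Y, hY, rfl⟩ := hc X hX
  rw [← Matrix.add_mul, ← Matrix.mul_add, re_det_conjTranspose_mul_mul,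
    re_det_conjTranspose_mul_mul]
  refine mul_le_mul_of_nonneg_left ?_ (Complex.normSq_nonneg _)
  have h := hY.1.re_det_one_add_smul 1
  simp only [one_smul, one_mul] at h
  rw [h, det_one, Complex.one_re]
  exact Finset.one_le_prod fun i _ => by linarith [hY.eigenvalues_nonneg i]

theorem PosDef.re_det_add_lt_add_smul {B X : Matrix ι ι ℂ} (hB : B.PosDef) (hX : X.PosSemidef)
    (h : B.det.re < (B + X).det.re) {u : ℝ} (hu : 1 < u) :
    (B + X).det.re < (B + u • X).det.re := by
  obtain ⟨R, hR, rfl, hc⟩ := hB.exists_congr_one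
  obtain ⟨Y, hY, rfl⟩ := hc X hX
  have hs : u • (Rᴴ * Y * R) = Rᴴ * (u • Y) * R := by simp
  rw [hs]
  simp only [← Matrix.add_mul, ← Matrix.mul_add, re_det_conjTranspose_mul_mul] at h ⊢
  have hpos : 0 < Complex.normSq R.det := Complex.normSq_pos.mpr hR
  refine mul_lt_mul_of_pos_left ?_ hpos
  replace h := lt_of_mul_lt_mul_left h hpos.le
  have h1 := hY.1.re_det_one_add_smul 1
  simp only [one_smul, one_mul] at h1
  rw [h1, det_one, Complex.one_re] at h
  rw [h1, hY.1.re_det_one_add_smul u]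
  have hnn := hY.eigenvalues_nonneg
  obtain ⟨i, hi⟩ : ∃ i, hY.1.eigenvalues i ≠ 0 := by
    by_contra! hz
    simp [hz] at h
  refine Finset.prod_lt_prod (fun i _ => by linarith [hnn i])
    (fun i _ => by nlinarith [hnn i]) ⟨i, Finset.mem_univ i, ?_⟩
  have : 0 < hY.1.eigenvalues i := lt_of_le_of_ne (hnn i) hi.symm
  nlinarith

theorem PosSemidef.one_sub_inv_one_add {D : Matrix ι ι ℂ} (hD : D.PosSemidef) :
    (1 - (1 + D)⁻¹).PosSemidef := by
  have hA : (1 + D).PosDef := PosDef.one.add_posSemidef hD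
  have hu : IsUnit (1 + D).det := hA.det_pos.ne'.isUnit
  have h := (hD.add (posSemidef_self_mul_conjTranspose D)).mul_mul_conjTranspose_same (1 + D)⁻¹
  convert h using 1
  rw [hA.isHermitian.inv.eq, hD.isHermitian.eq,
    show D + D * D = D * (1 + D) by rw [Matrix.mul_add, Matrix.mul_one],
    Matrix.mul_assoc, Matrix.mul_assoc, mul_nonsing_inv _ hu, Matrix.mul_one]
  nth_rewrite 1 [← nonsing_inv_mul _ hu]
  rw [← Matrix.mul_one (1 + D)⁻¹, Matrix.mul_assoc, ← Matrix.mul_sub]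
  simp

/-- Log-submodularity of the determinant along the positive semidefinite cone. -/
theorem PosDef.re_det_add_add_mul_le {B D X : Matrix ι ι ℂ} (hB : B.PosDef) (hD : D.PosSemidef)
    (hX : X.PosSemidef) :
    (B + D + X).det.re * B.det.re ≤ (B + X).det.re * (B + D).det.re := by
  obtain ⟨R, hR, rfl, hc⟩ := hB.exists_congr_one
  obtain ⟨Y, hY, rfl⟩ := hc X hX
  obtain ⟨E, hE, rfl⟩ := hc D hD
  simp only [← Matrix.add_mul, ← Matrix.mul_add, re_det_conjTranspose_mul_mul]
  have hpos : 0 < Complex.normSq R.det := Complex.normSq_pos.mpr hR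
  suffices h : (1 + E + Y).det.re ≤ (1 + Y).det.re * (1 + E).det.re by
    simp only [det_one, Complex.one_re, mul_one]
    nlinarith [mul_le_mul_of_nonneg_left h (mul_pos hpos hpos).le]
  obtain ⟨C, rfl⟩ : ∃ C : Matrix ι ι ℂ, Y = Cᴴ * C := by
    open scoped MatrixOrder in
    exact CStarAlgebra.nonneg_iff_eq_star_mul_self.mp hY.nonneg
  have hA : (1 + E).PosDef := PosDef.one.add_posSemidef hE
  rw [det_add_mul _ _ hA.det_pos.ne'.isUnit, Complex.mul_re, hA.im_det, zero_mul, sub_zero,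
    det_one_add_mul_comm Cᴴ C, mul_comm]
  refine mul_le_mul_of_nonneg_right ?_ hA.re_det_pos.le
  have hP : (1 + C * (1 + E)⁻¹ * Cᴴ).PosDef :=
    PosDef.one.add_posSemidef (hA.inv.posSemidef.mul_mul_conjTranspose_same C)
  have h := hP.re_det_le_add (hE.one_sub_inv_one_add.mul_mul_conjTranspose_same C)
  rwa [add_assoc, ← Matrix.add_mul, ← Matrix.mul_add, add_sub_cancel, Matrix.mul_one] at h

/-- The rate of a signal covariance `X` against a noise covariance `A`. -/
def logDetGain (A X : Matrix ι ι ℂ) : ℝ :=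
  Real.log (A + X).det.re - Real.log A.det.re

theorem logDetGain_nonneg {A X : Matrix ι ι ℂ} (hA : A.PosDef) (hX : X.PosSemidef) :
    0 ≤ logDetGain A X :=
  sub_nonneg.mpr (Real.log_le_log hA.re_det_pos (hA.re_det_le_add hX))

theorem logDetGain_add_le {B D X : Matrix ι ι ℂ} (hB : B.PosDef) (hD : D.PosSemidef)
    (hX : X.PosSemidef) : logDetGain (B + D) X ≤ logDetGain B X := by
  have hBD := hB.add_posSemidef hD
  have hBX := (hB.add_posSemidef hX).re_det_pos
  have hBDX := (hBD.add_posSemidef hX).re_det_pos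
  have h := Real.log_le_log (mul_pos hBDX hB.re_det_pos) (hB.re_det_add_add_mul_le hD hX)
  rw [Real.log_mul hBDX.ne' hB.re_det_pos.ne', Real.log_mul hBX.ne' hBD.re_det_pos.ne'] at h
  unfold logDetGain
  linarith

theorem logDetGain_smul_smul {A X : Matrix ι ι ℂ} (hA : A.PosDef) (hX : X.PosSemidef) {s : ℝ}
    (hs : 0 < s) : logDetGain (s • A) (s • X) = logDetGain A X := by
  have h : s ^ Fintype.card ι ≠ 0 := by positivity
  unfold logDetGain
  rw [← smul_add, re_det_real_smul, re_det_real_smul, Real.log_mul h hA.re_det_pos.ne',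
    Real.log_mul h (hA.add_posSemidef hX).re_det_pos.ne']
  ring

theorem logDetGain_lt_smul {A X : Matrix ι ι ℂ} (hA : A.PosDef) (hX : X.PosSemidef)
    (h : 0 < logDetGain A X) {u : ℝ} (hu : 1 < u) : logDetGain A X < logDetGain A (u • X) := by
  have hAX := (hA.add_posSemidef hX).re_det_pos
  have := (Real.log_lt_log_iff hA.re_det_pos hAX).mp (sub_pos.mp h)
  exact sub_lt_sub_right (Real.log_lt_log hAX (hA.re_det_add_lt_add_smul hX this hu)) _

/-- Scaling all powers up strictly increases every positive rate under unit noise. -/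
theorem logDetGain_one_add_lt_smul {J X : Matrix ι ι ℂ} (hJ : J.PosSemidef) (hX : X.PosSemidef)
    (h : 0 < logDetGain (1 + J) X) {t : ℝ} (ht : 1 < t) :
    logDetGain (1 + J) X < logDetGain (1 + t • J) (t • X) := by
  obtain ⟨c, hc, hcJ⟩ := hJ.exists_smul_one_sub
  have hA : (1 + J).PosDef := PosDef.one.add_posSemidef hJ
  set s : ℝ := (1 + t * c) / (1 + c) with hs
  have hc1 : (0 : ℝ) < 1 + c := by linarith
  have hsc : s * (1 + c) = 1 + t * c := by rw [hs]; field_simp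
  have hs0 : 0 < s := by rw [hs]; positivity
  have hst : s < t := by rw [hs, div_lt_iff₀ hc1]; linarith
  have hD := hcJ.real_smul (sub_nonneg.mpr hst.le)
  have hsum : s • (1 + J) = (1 + t • J) + (t - s) • (c • (1 : Matrix ι ι ℂ) - J) := by
    have : s = 1 + (t - s) * c := by linarith
    rw [smul_sub, smul_smul, smul_add, sub_smul t s J]
    nth_rewrite 1 [this]
    rw [add_smul, one_smul]
    abel
  calc logDetGain (1 + J) X < logDetGain (1 + J) ((t / s) • X) :=
        logDetGain_lt_smul hA hX h ((one_lt_div hs0).mpr hst)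
    _ = logDetGain (s • (1 + J)) (t • X) := by
        rw [← logDetGain_smul_smul hA (hX.real_smul (div_pos (by linarith) hs0).le) hs0, smul_smul,
          mul_div_cancel₀ _ hs0.ne']
    _ ≤ logDetGain (1 + t • J) (t • X) := by
        rw [hsum]
        exact logDetGain_add_le
          (PosDef.one.add_posSemidef (hJ.real_smul (by linarith))) hD (hX.real_smul (by linarith))

theorem continuousAt_logDetGain_smul {A X : Matrix ι ι ℂ} (hA : A.PosDef) (hX : X.PosSemidef) :
    ContinuousAt (fun a : ℝ => logDetGain A (a • X)) 1 := by
  unfold logDetGain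
  refine ContinuousAt.sub (ContinuousAt.log ?_ ?_) continuousAt_const
  · exact (Complex.continuous_re.comp (Continuous.matrix_det (by fun_prop))).continuousAt
  · simpa using (hA.add_posSemidef hX).re_det_pos.ne'

end Matrix

section Bmac

variable {L : ℕ} {m n : Fin L → ℕ} {H : ∀ l k : Fin L, Matrix (Fin (n l)) (Fin (m k)) ℂ}
  {Φ : Fin L → Fin L → ℝ} {S : ∀ k : Fin L, Matrix (Fin (m k)) (Fin (m k)) ℂ}

theorem bmacRate_eq_logDetGain (l : Fin L) :
    bmacRate m n H Φ S l = logDetGain (bmacOmega m n H Φ S l) (H l l * S l * (H l l)ᴴ) := rfl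

theorem posSemidef_bmac_interference (hΦ : ∀ l k, 0 ≤ Φ l k) (hS : ∀ k, (S k).PosSemidef)
    (l : Fin L) : (∑ k : Fin L, Φ l k • (H l k * S k * (H l k)ᴴ)).PosSemidef :=
  posSemidef_sum _ fun k _ => ((hS k).mul_mul_conjTranspose_same _).real_smul (hΦ l k)

theorem posDef_bmacOmega (hΦ : ∀ l k, 0 ≤ Φ l k) (hS : ∀ k, (S k).PosSemidef) (l : Fin L) :
    (bmacOmega m n H Φ S l).PosDef :=
  PosDef.one.add_posSemidef (posSemidef_bmac_interference hΦ hS l)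

theorem bmacRate_nonneg (hΦ : ∀ l k, 0 ≤ Φ l k) (hS : ∀ k, (S k).PosSemidef) (l : Fin L) :
    0 ≤ bmacRate m n H Φ S l :=
  logDetGain_nonneg (posDef_bmacOmega hΦ hS l) ((hS l).mul_mul_conjTranspose_same _)

/-- Scaling all transmit powers up strictly increases every positive rate. -/
theorem bmacRate_lt_smul (hΦ : ∀ l k, 0 ≤ Φ l k) (hS : ∀ k, (S k).PosSemidef) {l : Fin L}
    (h : 0 < bmacRate m n H Φ S l) {t : ℝ} (ht : 1 < t) :
    bmacRate m n H Φ S l < bmacRate m n H Φ (fun k => t • S k) l := by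
  have key := logDetGain_one_add_lt_smul (posSemidef_bmac_interference hΦ hS l)
    ((hS l).mul_mul_conjTranspose_same (H l l)) h ht
  have hΩ : bmacOmega m n H Φ (fun k => t • S k) l =
      1 + t • ∑ k : Fin L, Φ l k • (H l k * S k * (H l k)ᴴ) := by
    simp only [bmacOmega, Matrix.mul_smul, Matrix.smul_mul, Finset.smul_sum]
    simp only [smul_comm t]
  have hX : H l l * (t • S l) * (H l l)ᴴ = t • (H l l * S l * (H l l)ᴴ) := by simp
  rw [bmacRate_eq_logDetGain, bmacRate_eq_logDetGain, hΩ, hX]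
  exact key

/-- Removing part of the power of link `k` does not decrease the rates of the other links. -/
theorem bmacRate_le_update (hΦ : ∀ l k, 0 ≤ Φ l k) (hS : ∀ k, (S k).PosSemidef) {k l : Fin L}
    (hlk : l ≠ k) {a : ℝ} (ha0 : 0 ≤ a) (ha1 : a ≤ 1) :
    bmacRate m n H Φ S l ≤ bmacRate m n H Φ (Function.update S k (a • S k)) l := by
  have hS' : ∀ j, (Function.update S k (a • S k) j).PosSemidef := by
    intro j
    by_cases h : j = k
    · subst h; simpa using (hS j).real_smul ha0
    · simpa [h] using hS j
  have hΩ : bmacOmega m n H Φ S l = bmacOmega m n H Φ (Function.update S k (a • S k)) l +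
      Φ l k • (1 - a) • (H l k * S k * (H l k)ᴴ) := by
    unfold bmacOmega
    rw [add_assoc, ← Finset.add_sum_erase _ _ (Finset.mem_univ k),
      ← Finset.add_sum_erase Finset.univ
        (fun j => Φ l j • (H l j * Function.update S k (a • S k) j * (H l j)ᴴ)) (Finset.mem_univ k)]
    have : ∑ j ∈ Finset.univ.erase k,
        Φ l j • (H l j * Function.update S k (a • S k) j * (H l j)ᴴ) =
        ∑ j ∈ Finset.univ.erase k, Φ l j • (H l j * S j * (H l j)ᴴ) :=
      Finset.sum_congr rfl fun j hj => by rw [Function.update_of_ne (Finset.ne_of_mem_erase hj)]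
    rw [this]
    simp only [Function.update_self, Matrix.mul_smul, Matrix.smul_mul, sub_smul, one_smul, smul_sub]
    abel
  rw [bmacRate_eq_logDetGain, bmacRate_eq_logDetGain, Function.update_of_ne hlk, hΩ]
  exact logDetGain_add_le (posDef_bmacOmega hΦ hS' l)
    ((((hS k).mul_mul_conjTranspose_same _).real_smul (sub_nonneg.mpr ha1)).real_smul (hΦ l k))
    ((hS l).mul_mul_conjTranspose_same _)

theorem bmacRate_update_self (hΦd : ∀ l, Φ l l = 0) (k : Fin L) (a : ℝ) :
    bmacRate m n H Φ (Function.update S k (a • S k)) k =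
      logDetGain (bmacOmega m n H Φ S k) (a • (H k k * S k * (H k k)ᴴ)) := by
  have hΩ : bmacOmega m n H Φ (Function.update S k (a • S k)) k = bmacOmega m n H Φ S k := by
    unfold bmacOmega
    congr 1
    refine Finset.sum_congr rfl fun j _ => ?_
    by_cases h : j = k
    · subst h; simp [hΦd]
    · rw [Function.update_of_ne h]
  rw [bmacRate_eq_logDetGain, hΩ]
  simp

/-- If link `k` has slack, some power can be saved while all required rates are still met. -/
theorem exists_bmac_saving (hΦ : ∀ l k, 0 ≤ Φ l k) (hΦd : ∀ l, Φ l l = 0)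
    (hS : ∀ k, (S k).PosSemidef) {r : Fin L → ℝ} (hr0 : ∀ l, 0 ≤ r l)
    (hr : ∀ l, r l ≤ bmacRate m n H Φ S l) {k : Fin L} (hk : r k < bmacRate m n H Φ S k) :
    ∃ S' : ∀ k : Fin L, Matrix (Fin (m k)) (Fin (m k)) ℂ, (∀ k, (S' k).PosSemidef) ∧
      ∑ l, (S' l).trace.re < ∑ l, (S l).trace.re ∧ ∀ l, r l ≤ bmacRate m n H Φ S' l := by
  have hcont := continuousAt_logDetGain_smul (posDef_bmacOmega (H := H) hΦ hS k)
    ((hS k).mul_mul_conjTranspose_same (H k k))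
  have hev := hcont.eventually (lt_mem_nhds (a := r k) (by
    simpa [one_smul, ← bmacRate_eq_logDetGain] using hk))
  have hIoo : ∀ᶠ a : ℝ in nhdsWithin 1 (Set.Iio 1), a ∈ Set.Ioo (0 : ℝ) 1 :=
    Ioo_mem_nhdsLT zero_lt_one
  obtain ⟨a, hak, ha0, ha1⟩ := ((hev.filter_mono nhdsWithin_le_nhds).and hIoo).exists
  refine ⟨Function.update S k (a • S k), fun j => ?_, ?_, fun l => ?_⟩
  · by_cases h : j = k
    · subst h; simpa using (hS j).real_smul ha0.le
    · simpa [h] using hS j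
  · have htr : 0 < (S k).trace.re := by
      have hnn := Complex.le_def.mp (hS k).trace_nonneg
      refine lt_of_le_of_ne hnn.1 fun h0 => ?_
      have hz : S k = 0 := (hS k).trace_eq_zero_iff.mp (Complex.ext h0.symm hnn.2.symm)
      have : bmacRate m n H Φ S k = 0 := by simp [bmacRate, hz]
      linarith [hr0 k]
    refine Finset.sum_lt_sum (fun j _ => ?_) ⟨k, Finset.mem_univ k, ?_⟩
    · by_cases h : j = k
      · subst h
        simp only [Function.update_self, trace_smul, Complex.smul_re, smul_eq_mul]
        nlinarith
      · rw [Function.update_of_ne h]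
    · simp only [Function.update_self, trace_smul, Complex.smul_re, smul_eq_mul]
      nlinarith
  · by_cases h : l = k
    · subst h
      rw [bmacRate_update_self hΦd]
      exact hak.le
    · exact (hr l).trans (bmacRate_le_update hΦ hS h ha0.le ha1.le)

/-- Rates achievable with slack power can be scaled up within the power budget. -/
theorem exists_smul_mem_bmacRegion (hΦ : ∀ l k, 0 ≤ Φ l k) (hS : ∀ k, (S k).PosSemidef)
    {PT : ℝ} (hPT : 0 < PT) (hlt : ∑ l, (S l).trace.re < PT) {r : Fin L → ℝ}
    (hr0 : ∀ l, 0 ≤ r l) (hr : ∀ l, r l ≤ bmacRate m n H Φ S l) :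
    ∃ δ : ℝ, 0 < δ ∧ (1 + δ) • r ∈ bmacRegion m n H Φ PT := by
  obtain ⟨t, ht, htP⟩ : ∃ t : ℝ, 1 < t ∧ t * ∑ l, (S l).trace.re ≤ PT := by
    set p := ∑ l, (S l).trace.re
    have hp : 0 ≤ p := Finset.sum_nonneg fun l _ => (Complex.le_def.mp (hS l).trace_nonneg).1
    rcases hp.eq_or_lt with h | h
    · exact ⟨2, one_lt_two, by rw [← h]; linarith⟩
    · exact ⟨PT / p, (one_lt_div h).mpr hlt, (div_mul_cancel₀ _ h.ne').le⟩
  have hS' : ∀ k, (t • S k).PosSemidef := fun k => (hS k).real_smul (by linarith)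
  have hev : ∀ᶠ δ : ℝ in nhdsWithin 0 (Set.Ioi 0),
      ∀ l, (1 + δ) * r l ≤ bmacRate m n H Φ (fun k => t • S k) l := by
    refine Filter.eventually_all.mpr fun l => ?_
    rcases (hr0 l).eq_or_lt with h | h
    · refine Filter.Eventually.of_forall fun δ => ?_
      rw [← h, mul_zero]
      exact bmacRate_nonneg hΦ hS' l
    · have hlt' := (hr l).trans_lt (bmacRate_lt_smul hΦ hS (h.trans_le (hr l)) ht)
      have hc : ContinuousAt (fun δ : ℝ => (1 + δ) * r l) 0 := by fun_prop
      have := hc.eventually (Iio_mem_nhds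
        (show (1 + 0) * r l < bmacRate m n H Φ (fun k => t • S k) l by simpa using hlt'))
      exact (this.filter_mono nhdsWithin_le_nhds).mono fun δ hδ => hδ.le
  obtain ⟨δ, hδ, hδ0⟩ := (hev.and self_mem_nhdsWithin).exists
  have hδ0' : (0 : ℝ) < δ := hδ0
  refine ⟨δ, hδ0', fun l => mul_nonneg (by linarith) (hr0 l), fun k => t • S k, hS', ?_, hδ⟩
  simpa [trace_smul, Finset.mul_sum] using htP

end Bmac

/-- Every boundary point of the achievable region is a strong Pareto optimum. -/
theorem stmt0 {L : ℕ} (hL : 1 ≤ L) (m n : Fin L → ℕ)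
    (H : ∀ l k : Fin L, Matrix (Fin (n l)) (Fin (m k)) ℂ)
    (Φ : Fin L → Fin L → ℝ)
    (hΦ : ∀ l k, Φ l k = 0 ∨ Φ l k = 1) (hΦd : ∀ l, Φ l l = 0)
    (PT : ℝ) (hPT : 0 < PT)
    (r : Fin L → ℝ) (hr : r ∈ bmacRegion m n H Φ PT)
    (hbd : ∀ δ : ℝ, 0 < δ → (1 + δ) • r ∉ bmacRegion m n H Φ PT) :
    ¬ ∃ r' ∈ bmacRegion m n H Φ PT, (∀ l, r l ≤ r' l) ∧ ∃ k, r k < r' k := by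
  rintro ⟨r', ⟨-, S, hS, hP, hS'⟩, hle, k, hk⟩
  have hΦ0 : ∀ l k, 0 ≤ Φ l k := fun l k => by rcases hΦ l k with h | h <;> simp [h]
  obtain ⟨T, hT, hTP, hTr⟩ := exists_bmac_saving hΦ0 hΦd hS hr.1
    (fun l => (hle l).trans (hS' l)) (hk.trans_le (hS' k))
  obtain ⟨δ, hδ, hmem⟩ := exists_smul_mem_bmacRegion hΦ0 hT hPT (hTP.trans_le hP) hr.1 hTr
  exact hbd δ hδ hmem
end
end

section
/- Under the polite water-filling structure, the pair (Σ, Σ̂) satisfies the matrix equation Ω̂^{-1} H^† Σ̂ H = Σ H^† Ω^{-1} H. -/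
open Matrix ComplexOrder

noncomputable section

/-- Under the polite water-filling structure, the forward and dual covariances
satisfy the matrix equation `Ω̂⁻¹ Hᴴ Σ̂ H = Σ Hᴴ Ω⁻¹ H`. -/
theorem stmt5 {n' m' N : ℕ}
    (Ω : Matrix (Fin n') (Fin n') ℂ) (Ωh : Matrix (Fin m') (Fin m') ℂ)
    (hΩ : Ω.PosDef) (hΩh : Ωh.PosDef)
    (sqΩ : Matrix (Fin n') (Fin n') ℂ)
    (hsqΩ : sqΩ.PosDef) (hsqΩ2 : sqΩ * sqΩ = Ω)
    (sqΩh : Matrix (Fin m') (Fin m') ℂ)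
    (hsqΩh : sqΩh.PosDef) (hsqΩh2 : sqΩh * sqΩh = Ωh)
    (H : Matrix (Fin n') (Fin m') ℂ)
    (F : Matrix (Fin n') (Fin N) ℂ) (G : Matrix (Fin m') (Fin N) ℂ)
    (hF : Fᴴ * F = 1) (hG : Gᴴ * G = 1)
    (δ : Fin N → ℝ) (hδ : ∀ i, 0 < δ i)
    (hSVD : sqΩ⁻¹ * H * sqΩh⁻¹ = F * Matrix.diagonal (fun i => (δ i : ℂ)) * Gᴴ)
    (ν : ℝ) (hν : 0 ≤ ν)
    (D : Matrix (Fin N) (Fin N) ℂ)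
    (hD : D = Matrix.diagonal (fun i => ((max (ν - ((δ i) ^ 2)⁻¹) 0 : ℝ) : ℂ)))
    (Sig : Matrix (Fin m') (Fin m') ℂ) (hSig : Sig = sqΩh⁻¹ * G * D * Gᴴ * sqΩh⁻¹)
    (Sigh : Matrix (Fin n') (Fin n') ℂ) (hSigh : Sigh = sqΩ⁻¹ * F * D * Fᴴ * sqΩ⁻¹) :
    Ωh⁻¹ * Hᴴ * Sigh * H = Sig * Hᴴ * Ω⁻¹ * H := by
  have hA : IsUnit sqΩ.det := (Matrix.isUnit_iff_isUnit_det _).mp hsqΩ.isUnit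
  have hB : IsUnit sqΩh.det := (Matrix.isUnit_iff_isUnit_det _).mp hsqΩh.isUnit
  set S : Matrix (Fin N) (Fin N) ℂ := Matrix.diagonal (fun i => (δ i : ℂ)) with hS
  have hSH : Sᴴ = S := by
    rw [hS, Matrix.diagonal_conjTranspose]
    congr 1
    ext i
    simp
  have hcomm : S * D = D * S := by
    rw [hS, hD, Matrix.diagonal_mul_diagonal, Matrix.diagonal_mul_diagonal]
    simp only [mul_comm]
  have hH : H = sqΩ * (F * (S * (Gᴴ * sqΩh))) := by
    calc H = sqΩ * (sqΩ⁻¹ * H * sqΩh⁻¹) * sqΩh := by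
          simp only [Matrix.mul_assoc, Matrix.nonsing_inv_mul _ hB,
            Matrix.mul_nonsing_inv_cancel_left _ _ hA, Matrix.mul_one]
      _ = _ := by rw [hSVD]; simp only [Matrix.mul_assoc]
  have hHH : Hᴴ = sqΩh * (G * (S * (Fᴴ * sqΩ))) := by
    rw [hH]
    simp only [Matrix.conjTranspose_mul, Matrix.conjTranspose_conjTranspose, hSH,
      hsqΩ.isHermitian.eq, hsqΩh.isHermitian.eq, Matrix.mul_assoc]
  have cancelF (X : Matrix (Fin N) (Fin m') ℂ) : Fᴴ * (F * X) = X := by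
    rw [← Matrix.mul_assoc, hF, Matrix.one_mul]
  have cancelG (X : Matrix (Fin N) (Fin m') ℂ) : Gᴴ * (G * X) = X := by
    rw [← Matrix.mul_assoc, hG, Matrix.one_mul]
  have commX (X : Matrix (Fin N) (Fin m') ℂ) : S * (D * X) = D * (S * X) := by
    rw [← Matrix.mul_assoc, hcomm, Matrix.mul_assoc]
  rw [hHH, hSig, hSigh, ← hsqΩ2, ← hsqΩh2, hH, Matrix.mul_inv_rev, Matrix.mul_inv_rev]
  simp only [Matrix.mul_assoc, Matrix.nonsing_inv_mul_cancel_left _ _ hA,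
    Matrix.nonsing_inv_mul_cancel_left _ _ hB, Matrix.mul_nonsing_inv_cancel_left _ _ hA,
    cancelF, cancelG, commX]
end
end

section
/- Under the polite water-filling structure, the dual covariance matrix has the explicit expression Σ̂ = ν (Ω^{-1} − (H Σ H^† + Ω)^{-1}). -/
open Matrix ComplexOrder

noncomputable section

/-- A Woodbury-type identity: if `Fᴴ * F = 1` and `E = K + E * K`, then the inverse of
`S * (1 + F * E * Fᴴ) * S` is `S⁻¹ * (1 - F * K * Fᴴ) * S⁻¹`. -/
theorem inv_congr_one_add_isometry_conj {ι κ R : Type*} [Fintype ι] [DecidableEq ι]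
    [Fintype κ] [DecidableEq κ] [CommRing R] [StarRing R]
    (S : Matrix ι ι R) {F : Matrix ι κ R} (hF : Fᴴ * F = 1)
    {E K : Matrix κ κ R} (hEK : E = K + E * K) :
    (S * (1 + F * E * Fᴴ) * S)⁻¹ = S⁻¹ * (1 - F * K * Fᴴ) * S⁻¹ := by
  have hcore : (1 + F * E * Fᴴ) * (1 - F * K * Fᴴ) = 1 := by
    have hprod : F * E * Fᴴ * (F * K * Fᴴ) = F * (E * K) * Fᴴ := by
      calc F * E * Fᴴ * (F * K * Fᴴ) = F * E * (Fᴴ * F) * K * Fᴴ := by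
            simp only [Matrix.mul_assoc]
        _ = F * (E * K) * Fᴴ := by rw [hF, Matrix.mul_one, Matrix.mul_assoc F]
    have hsplit : F * E * Fᴴ = F * K * Fᴴ + F * (E * K) * Fᴴ := by
      rw [← Matrix.add_mul, ← Matrix.mul_add, ← hEK]
    rw [Matrix.mul_sub, Matrix.mul_one, Matrix.add_mul, Matrix.one_mul, hprod, ← hsplit,
      add_sub_cancel_right]
  rw [Matrix.mul_inv_rev, Matrix.mul_inv_rev, Matrix.inv_eq_right_inv hcore, ← Matrix.mul_assoc]

/-- With `d = (ν - δ⁻²)⁺`, water-filling satisfies `d = ν * (δ² d / (1 + δ² d))`. -/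
theorem waterfilling_level_identity {δ ν : ℝ} (hδ : 0 < δ) :
    max (ν - (δ ^ 2)⁻¹) 0 = ν * (δ ^ 2 * max (ν - (δ ^ 2)⁻¹) 0 /
      (1 + δ ^ 2 * max (ν - (δ ^ 2)⁻¹) 0)) := by
  rcases le_total (ν - (δ ^ 2)⁻¹) 0 with h | h
  · simp [max_eq_right h]
  · have hδ2 : 0 < δ ^ 2 := by positivity
    have hν' : 0 < ν := by linarith [inv_pos.mpr hδ2]
    have hden : 1 + δ ^ 2 * (ν - (δ ^ 2)⁻¹) = δ ^ 2 * ν := by field_simp; ring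
    rw [max_eq_left h, hden]
    field_simp

/-- Under the polite water-filling structure, the dual covariance has the
explicit expression `Σ̂ = ν (Ω⁻¹ − (H Σ Hᴴ + Ω)⁻¹)`. -/
theorem stmt6 {n' m' N : ℕ}
    (Ω : Matrix (Fin n') (Fin n') ℂ) (Ωh : Matrix (Fin m') (Fin m') ℂ)
    (hΩ : Ω.PosDef) (hΩh : Ωh.PosDef)
    (sqΩ : Matrix (Fin n') (Fin n') ℂ)
    (hsqΩ : sqΩ.PosDef) (hsqΩ2 : sqΩ * sqΩ = Ω)
    (sqΩh : Matrix (Fin m') (Fin m') ℂ)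
    (hsqΩh : sqΩh.PosDef) (hsqΩh2 : sqΩh * sqΩh = Ωh)
    (H : Matrix (Fin n') (Fin m') ℂ)
    (F : Matrix (Fin n') (Fin N) ℂ) (G : Matrix (Fin m') (Fin N) ℂ)
    (hF : Fᴴ * F = 1) (hG : Gᴴ * G = 1)
    (δ : Fin N → ℝ) (hδ : ∀ i, 0 < δ i)
    (hSVD : sqΩ⁻¹ * H * sqΩh⁻¹ = F * Matrix.diagonal (fun i => (δ i : ℂ)) * Gᴴ)
    (ν : ℝ) (hν : 0 ≤ ν)
    (D : Matrix (Fin N) (Fin N) ℂ)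
    (hD : D = Matrix.diagonal (fun i => ((max (ν - ((δ i) ^ 2)⁻¹) 0 : ℝ) : ℂ)))
    (Sig : Matrix (Fin m') (Fin m') ℂ) (hSig : Sig = sqΩh⁻¹ * G * D * Gᴴ * sqΩh⁻¹)
    (Sigh : Matrix (Fin n') (Fin n') ℂ) (hSigh : Sigh = sqΩ⁻¹ * F * D * Fᴴ * sqΩ⁻¹) :
    Sigh = ν • (Ω⁻¹ - (H * Sig * Hᴴ + Ω)⁻¹) := by
  have hS : IsUnit sqΩ.det := (Matrix.isUnit_iff_isUnit_det _).mp hsqΩ.isUnit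
  set Δ : Matrix (Fin N) (Fin N) ℂ := Matrix.diagonal (fun i => (δ i : ℂ)) with hΔ
  set e : Fin N → ℝ := fun i => δ i ^ 2 * max (ν - (δ i ^ 2)⁻¹) 0 with he
  have he0 : ∀ i, 0 ≤ e i := fun i => mul_nonneg (sq_nonneg _) (le_max_right _ _)
  set K : Matrix (Fin N) (Fin N) ℂ :=
    Matrix.diagonal (fun i => ((e i / (1 + e i) : ℝ) : ℂ)) with hK
  have hΔH : Δᴴ = Δ := by
    rw [hΔ, Matrix.diagonal_conjTranspose]
    congr 1
    ext i
    simp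
  have hE : Δ * D * Δ = Matrix.diagonal (fun i => ((e i : ℝ) : ℂ)) := by
    rw [hD, hΔ, Matrix.diagonal_mul_diagonal, Matrix.diagonal_mul_diagonal]
    congr 1
    ext i
    simp only [he]
    push_cast
    ring
  have hEK : Δ * D * Δ = K + Δ * D * Δ * K := by
    rw [hE, hK, Matrix.diagonal_mul_diagonal, Matrix.diagonal_add]
    congr 1
    ext i
    rw [← Complex.ofReal_mul, ← Complex.ofReal_add]
    have := he0 i
    congr 1
    field_simp
  have hDK : D = ν • K := by
    rw [hD, hK, ← Matrix.diagonal_smul]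
    congr 1
    ext i
    rw [Pi.smul_apply, Complex.real_smul, ← Complex.ofReal_mul]
    exact congrArg _ (waterfilling_level_identity (hδ i))
  have hHs : H * sqΩh⁻¹ = sqΩ * F * Δ * Gᴴ := by
    rw [Matrix.mul_assoc sqΩ, Matrix.mul_assoc sqΩ, ← hSVD, Matrix.mul_assoc sqΩ⁻¹,
      Matrix.mul_nonsing_inv_cancel_left _ _ hS]
  have hsH : sqΩh⁻¹ * Hᴴ = G * Δ * Fᴴ * sqΩ := by
    have h := congrArg Matrix.conjTranspose hHs
    simpa only [Matrix.conjTranspose_mul, Matrix.conjTranspose_conjTranspose,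
      Matrix.conjTranspose_nonsing_inv, hsqΩh.isHermitian.eq, hsqΩ.isHermitian.eq, hΔH,
      Matrix.mul_assoc] using h
  have hcov : H * Sig * Hᴴ + Ω = sqΩ * (1 + F * (Δ * D * Δ) * Fᴴ) * sqΩ := by
    calc H * Sig * Hᴴ + Ω
        = (H * sqΩh⁻¹) * G * D * Gᴴ * (sqΩh⁻¹ * Hᴴ) + sqΩ * sqΩ := by
          rw [hSig, hsqΩ2]
          simp only [Matrix.mul_assoc]
      _ = sqΩ * F * Δ * (Gᴴ * G) * D * (Gᴴ * G) * Δ * Fᴴ * sqΩ + sqΩ * sqΩ := by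
          rw [hHs, hsH]
          simp only [Matrix.mul_assoc]
      _ = sqΩ * (1 + F * (Δ * D * Δ) * Fᴴ) * sqΩ := by
          rw [hG, Matrix.mul_add, Matrix.add_mul, add_comm]
          simp only [Matrix.mul_one, Matrix.mul_assoc]
  rw [hcov, inv_congr_one_add_isometry_conj sqΩ hF hEK, ← hsqΩ2, Matrix.mul_inv_rev,
    Matrix.mul_sub, Matrix.sub_mul, Matrix.mul_one, sub_sub_cancel, hSigh, hDK]
  simp only [Matrix.mul_smul, Matrix.smul_mul, Matrix.mul_assoc]
end
end

section
/- The achievable rate region of the network with linear constraint and colored noise equals that of its dual network: R = R̂. -/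
open Matrix ComplexOrder

noncomputable section

/-- Interference-plus-noise covariance of link `l` with colored noise `Wn`. -/
def genOmega {L : ℕ} (m n : Fin L → ℕ)
    (H : ∀ l k : Fin L, Matrix (Fin (n l)) (Fin (m k)) ℂ)
    (Φ : Fin L → Fin L → ℝ)
    (Wn : ∀ l : Fin L, Matrix (Fin (n l)) (Fin (n l)) ℂ)
    (S : ∀ k : Fin L, Matrix (Fin (m k)) (Fin (m k)) ℂ) (l : Fin L) :
    Matrix (Fin (n l)) (Fin (n l)) ℂ :=
  Wn l + ∑ k : Fin L, Φ l k • (H l k * S k * (H l k)ᴴ)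

/-- Rate of link `l` with colored noise `Wn`. -/
def genRate {L : ℕ} (m n : Fin L → ℕ)
    (H : ∀ l k : Fin L, Matrix (Fin (n l)) (Fin (m k)) ℂ)
    (Φ : Fin L → Fin L → ℝ)
    (Wn : ∀ l : Fin L, Matrix (Fin (n l)) (Fin (n l)) ℂ)
    (S : ∀ k : Fin L, Matrix (Fin (m k)) (Fin (m k)) ℂ) (l : Fin L) : ℝ :=
  Real.log ((genOmega m n H Φ Wn S l + H l l * S l * (H l l)ᴴ).det.re)
    - Real.log ((genOmega m n H Φ Wn S l).det.re)

/-- Achievable rate region of the network with linear constraint matrices `Wc`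
and noise covariances `Wn`. -/
def genRegion {L : ℕ} (m n : Fin L → ℕ)
    (H : ∀ l k : Fin L, Matrix (Fin (n l)) (Fin (m k)) ℂ)
    (Φ : Fin L → Fin L → ℝ)
    (Wc : ∀ k : Fin L, Matrix (Fin (m k)) (Fin (m k)) ℂ)
    (Wn : ∀ l : Fin L, Matrix (Fin (n l)) (Fin (n l)) ℂ)
    (PT : ℝ) : Set (Fin L → ℝ) :=
  {r | (∀ l, 0 ≤ r l) ∧
    ∃ S : ∀ k : Fin L, Matrix (Fin (m k)) (Fin (m k)) ℂ,
      (∀ k, (S k).PosSemidef) ∧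
      (∑ l, (Matrix.trace (S l * Wc l)).re) ≤ PT ∧
      ∀ l, r l ≤ genRate m n H Φ Wn S l}

section QuadraticForms

open scoped MatrixOrder

variable {α β : Type*} [Fintype α] [Fintype β]

/-- The rank-one positive semidefinite matrix `x xᴴ`. -/
def rankOne {α : Type*} (x : α → ℂ) : Matrix α α ℂ := vecMulVec x (star x)

/-- The real part of the quadratic form `xᴴ M x`. -/
def qform (M : Matrix α α ℂ) (x : α → ℂ) : ℝ := (star x ⬝ᵥ M *ᵥ x).re

/-- The gain `|yᴴ G x|²` from the transmit vector `x` to the receive vector `y`. -/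
def gain (y : α → ℂ) (G : Matrix α β ℂ) (x : β → ℂ) : ℝ := Complex.normSq (star y ⬝ᵥ G *ᵥ x)

lemma gain_nonneg (y : α → ℂ) (G : Matrix α β ℂ) (x : β → ℂ) : 0 ≤ gain y G x :=
  Complex.normSq_nonneg _

lemma gain_conjTranspose (y : α → ℂ) (G : Matrix α β ℂ) (x : β → ℂ) :
    gain x Gᴴ y = gain y G x := by
  have h : star x ⬝ᵥ Gᴴ *ᵥ y = star (star y ⬝ᵥ G *ᵥ x) := by
    rw [← star_dotProduct, star_mulVec, dotProduct_mulVec]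
  rw [gain, gain, h, Complex.star_def, Complex.normSq_conj]

lemma gain_smul_right (y : α → ℂ) (G : Matrix α β ℂ) (c : ℝ) (x : β → ℂ) :
    gain y G ((c : ℂ) • x) = c ^ 2 * gain y G x := by
  simp [gain, mulVec_smul, dotProduct_smul, Complex.normSq_mul, Complex.normSq_ofReal, sq]

lemma posSemidef_rankOne (x : α → ℂ) : (rankOne x).PosSemidef :=
  posSemidef_vecMulVec_self_star x

lemma posSemidef_sum_rankOne {ι : Type*} (s : Finset ι) (x : ι → α → ℂ) :
    (∑ i ∈ s, rankOne (x i)).PosSemidef :=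
  posSemidef_sum s fun i _ => posSemidef_rankOne (x i)

lemma conj_rankOne {α : Type*} (G : Matrix α β ℂ) (x : β → ℂ) :
    G * rankOne x * Gᴴ = rankOne (G *ᵥ x) := by
  rw [rankOne, mul_vecMulVec, vecMulVec_mul, rankOne, star_mulVec]

lemma conj_sum_rankOne {α ι : Type*} (s : Finset ι) (G : Matrix α β ℂ) (x : ι → β → ℂ) :
    G * (∑ i ∈ s, rankOne (x i)) * Gᴴ = ∑ i ∈ s, rankOne (G *ᵥ x i) := by
  simp_rw [Matrix.mul_sum, Matrix.sum_mul, conj_rankOne]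

lemma qform_add (M N : Matrix α α ℂ) (x : α → ℂ) : qform (M + N) x = qform M x + qform N x := by
  simp [qform, add_mulVec]

lemma qform_sum {ι : Type*} (s : Finset ι) (M : ι → Matrix α α ℂ) (x : α → ℂ) :
    qform (∑ i ∈ s, M i) x = ∑ i ∈ s, qform (M i) x := by
  simp [qform, sum_mulVec, dotProduct_sum]

lemma qform_smul (c : ℝ) (M : Matrix α α ℂ) (x : α → ℂ) : qform (c • M) x = c * qform M x := by
  simp [qform, smul_mulVec]

lemma qform_smul_right (M : Matrix α α ℂ) (c : ℝ) (x : α → ℂ) :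
    qform M ((c : ℂ) • x) = c ^ 2 * qform M x := by
  simp [qform, mulVec_smul, star_smul, sq, mul_assoc]

lemma qform_rankOne_mulVec (G : Matrix α β ℂ) (x : β → ℂ) (y : α → ℂ) :
    qform (rankOne (G *ᵥ x)) y = gain y G x := by
  have h : star (G *ᵥ x) ⬝ᵥ y = star (star y ⬝ᵥ G *ᵥ x) := by
    rw [star_dotProduct]
  simp [qform, gain, rankOne, vecMulVec_mulVec, h, Complex.normSq_apply]

lemma trace_rankOne_mul (x : α → ℂ) (W : Matrix α α ℂ) :
    (trace (rankOne x * W)).re = qform W x := by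
  rw [rankOne, vecMulVec_mul, trace_vecMulVec, dotProduct_comm, ← dotProduct_mulVec, qform]

lemma qform_nonneg {M : Matrix α α ℂ} (hM : M.PosSemidef) (x : α → ℂ) : 0 ≤ qform M x :=
  hM.re_dotProduct_nonneg x

lemma qform_pos {M : Matrix α α ℂ} (hM : M.PosDef) {x : α → ℂ} (hx : x ≠ 0) : 0 < qform M x :=
  hM.re_dotProduct_pos hx

lemma ofReal_qform {M : Matrix α α ℂ} (hM : M.PosSemidef) (x : α → ℂ) :
    (qform M x : ℂ) = star x ⬝ᵥ M *ᵥ x :=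
  (Complex.eq_re_of_ofReal_le (r := 0) (by simpa using hM.dotProduct_mulVec_nonneg x)).symm

lemma exists_eq_conjTranspose_mul_self {M : Matrix α α ℂ} (hM : M.PosSemidef) :
    ∃ B : Matrix α α ℂ, M = Bᴴ * B := by
  classical
  exact CStarAlgebra.nonneg_iff_eq_star_mul_self.1 hM.nonneg

lemma exists_eq_sum_rankOne {M : Matrix α α ℂ} (hM : M.PosSemidef) :
    ∃ v : α → α → ℂ, M = ∑ i, rankOne (v i) := by
  obtain ⟨B, rfl⟩ := exists_eq_conjTranspose_mul_self hM
  refine ⟨fun i => star (B i), ?_⟩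
  ext a b
  simp [rankOne, mul_apply, Matrix.sum_apply, vecMulVec_apply]

lemma normSq_dotProduct_le (x y : α → ℂ) :
    Complex.normSq (star x ⬝ᵥ y) ≤ (star x ⬝ᵥ x).re * (star y ⬝ᵥ y).re := by
  have h := inner_mul_inner_self_le (𝕜 := ℂ) (WithLp.toLp 2 x) (WithLp.toLp 2 y)
  rw [norm_inner_symm (WithLp.toLp 2 y), ← sq, ← Complex.normSq_eq_norm_sq] at h
  simp only [EuclideanSpace.inner_eq_star_dotProduct, dotProduct_comm _ (star _)] at h
  exact h

/-- Cauchy–Schwarz for the semi-inner product of a positive semidefinite matrix. -/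
lemma gain_le_qform_mul_qform {M : Matrix α α ℂ} (hM : M.PosSemidef) (x y : α → ℂ) :
    gain x M y ≤ qform M x * qform M y := by
  obtain ⟨B, rfl⟩ := exists_eq_conjTranspose_mul_self hM
  have h (u w : α → ℂ) : star u ⬝ᵥ (Bᴴ * B) *ᵥ w = star (B *ᵥ u) ⬝ᵥ B *ᵥ w := by
    rw [star_mulVec, ← mulVec_mulVec, dotProduct_mulVec]
  simpa only [gain, qform, h] using normSq_dotProduct_le (B *ᵥ x) (B *ᵥ y)

variable [DecidableEq α]

lemma mulVec_inv_mulVec {M : Matrix α α ℂ} (hM : M.PosDef) (x : α → ℂ) :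
    M *ᵥ (M⁻¹ *ᵥ x) = x := by
  rw [mulVec_mulVec, mul_nonsing_inv _ ((isUnit_iff_isUnit_det M).1 hM.isUnit), one_mulVec]

lemma qform_inv_mulVec {M : Matrix α α ℂ} (hM : M.PosDef) (x : α → ℂ) :
    qform M (M⁻¹ *ᵥ x) = qform M⁻¹ x := by
  rw [qform, mulVec_inv_mulVec hM, star_mulVec, hM.inv.isHermitian.eq, ← dotProduct_mulVec, qform]

/-- The weighted Cauchy–Schwarz inequality `|yᴴ x|² ≤ (yᴴ M y) (xᴴ M⁻¹ x)`. -/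
lemma gain_le_qform_mul_qform_inv {M : Matrix α α ℂ} (hM : M.PosDef) (y : α → ℂ)
    (G : Matrix α β ℂ) (x : β → ℂ) :
    gain y G x ≤ qform M y * qform M⁻¹ (G *ᵥ x) := by
  have h := gain_le_qform_mul_qform hM.posSemidef y (M⁻¹ *ᵥ (G *ᵥ x))
  rwa [qform_inv_mulVec hM, gain, mulVec_inv_mulVec hM] at h

/-- The receive vector `M⁻¹ G x` has gain `(xᴴ Gᴴ M⁻¹ G x)²`. -/
lemma gain_inv_mulVec {M : Matrix α α ℂ} (hM : M.PosDef) (G : Matrix α β ℂ) (x : β → ℂ) :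
    gain (M⁻¹ *ᵥ (G *ᵥ x)) G x = qform M⁻¹ (G *ᵥ x) ^ 2 := by
  rw [gain, star_mulVec, hM.inv.isHermitian.eq, ← dotProduct_mulVec,
    ← ofReal_qform hM.inv.posSemidef, Complex.normSq_ofReal, sq]

lemma det_add_rankOne {M : Matrix α α ℂ} (hM : M.PosDef) (x : α → ℂ) :
    (M + rankOne x).det.re = M.det.re * (1 + qform M⁻¹ x) := by
  have h := det_add_replicateCol_mul_replicateRow (ι := Unit) ((isUnit_iff_isUnit_det M).1 hM.isUnit) x (star x)
  have e : (replicateRow Unit (star x) * M⁻¹ * replicateCol Unit x) () () = (qform M⁻¹ x : ℂ) := by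
    rw [ofReal_qform hM.inv.posSemidef, dotProduct_mulVec]
    simp [mul_apply, dotProduct, vecMul]
  rw [rankOne, vecMulVec_eq Unit, h, det_unique (n := Unit), Matrix.add_apply, one_apply_eq]
  change (M.det * (1 + (replicateRow Unit (star x) * M⁻¹ * replicateCol Unit x) () ())).re = _
  rw [e]
  simp

lemma re_det_pos {M : Matrix α α ℂ} (hM : M.PosDef) : 0 < M.det.re :=
  (Complex.pos_iff.1 hM.det_pos).1

/-- Chain rule for `log det` along an increasing enumeration of rank-one updates. -/
lemma log_det_add_sum_rankOne {ι : Type*} [LinearOrder ι] {M : Matrix α α ℂ} (hM : M.PosDef)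
    (x : ι → α → ℂ) (s : Finset ι) :
    Real.log ((M + ∑ i ∈ s, rankOne (x i)).det.re) - Real.log M.det.re =
      ∑ i ∈ s, Real.log (1 + qform (M + ∑ k ∈ s with k < i, rankOne (x k))⁻¹ (x i)) := by
  induction s using Finset.induction_on_max with
  | empty => simp
  | insert a s hs ih =>
    have ha : a ∉ s := fun h => (hs a h).false
    have hpd (t : Finset ι) : (M + ∑ i ∈ t, rankOne (x i)).PosDef :=
      hM.add_posSemidef (posSemidef_sum_rankOne t x)
    have hfa : {k ∈ insert a s | k < a} = s := by
      ext k
      simp only [Finset.mem_filter, Finset.mem_insert]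
      exact ⟨fun h => h.1.resolve_left h.2.ne, fun h => ⟨Or.inr h, hs k h⟩⟩
    have hfi : ∀ i ∈ s, {k ∈ insert a s | k < i} = {k ∈ s | k < i} := by
      intro i hi
      rw [Finset.filter_insert, if_neg (hs i hi).not_gt]
    have hsum : ∑ i ∈ s, Real.log (1 + qform (M + ∑ k ∈ insert a s with k < i, rankOne (x k))⁻¹ (x i))
        = ∑ i ∈ s, Real.log (1 + qform (M + ∑ k ∈ s with k < i, rankOne (x k))⁻¹ (x i)) :=
      Finset.sum_congr rfl fun i hi => by rw [hfi i hi]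
    rw [Finset.sum_insert ha, Finset.sum_insert ha, hfa, hsum, ← ih, add_comm (rankOne (x a)),
      ← add_assoc, det_add_rankOne (hpd s), Real.log_mul (re_det_pos (hpd s)).ne']
    · ring
    · have := qform_nonneg (hpd s).inv.posSemidef (x a)
      positivity

/-- Chain rule for `log det` along a decreasing enumeration of rank-one updates. -/
lemma log_det_add_sum_rankOne_gt {ι : Type*} [LinearOrder ι] {M : Matrix α α ℂ} (hM : M.PosDef)
    (x : ι → α → ℂ) (s : Finset ι) :
    Real.log ((M + ∑ i ∈ s, rankOne (x i)).det.re) - Real.log M.det.re =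
      ∑ i ∈ s, Real.log (1 + qform (M + ∑ k ∈ s with i < k, rankOne (x k))⁻¹ (x i)) :=
  log_det_add_sum_rankOne (ι := ιᵒᵈ) hM x s

end QuadraticForms

/-- A diagonally dominant system with nonpositive off-diagonal entries has a nonnegative solution
for its transpose. -/
lemma exists_nonneg_solution_transpose {ι : Type*} [Fintype ι] (D : ι → ℝ) (A : ι → ι → ℝ)
    (hA : ∀ j k, 0 ≤ A j k) (hD : ∀ j, ∑ k, A j k < D j) (b : ι → ℝ) (hb : ∀ j, 0 ≤ b j) :
    ∃ q : ι → ℝ, (∀ j, 0 ≤ q j) ∧ ∀ j, D j * q j = b j + ∑ k, A k j * q k := by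
  classical
  set M : Matrix ι ι ℝ := diagonal D - of A with hMdef
  have hdet : M.det ≠ 0 := by
    refine det_ne_zero_of_sum_row_lt_diag fun k => ?_
    have h1 : ∑ j ∈ Finset.univ.erase k, ‖M k j‖ = ∑ j ∈ Finset.univ.erase k, A k j := by
      refine Finset.sum_congr rfl fun j hj => ?_
      simp [hMdef, diagonal_apply_ne _ (Finset.ne_of_mem_erase hj).symm, abs_of_nonneg (hA k j)]
    have h2 := Finset.add_sum_erase Finset.univ (A k) (Finset.mem_univ k)
    have h3 : M k k ≤ ‖M k k‖ := le_abs_self _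
    have h4 : M k k = D k - A k k := by simp [hMdef]
    linarith [hD k]
  obtain ⟨q, hq⟩ : ∃ q, Mᵀ *ᵥ q = b :=
    ⟨(Mᵀ)⁻¹ *ᵥ b, by
      rw [mulVec_mulVec, mul_nonsing_inv _ (by simpa using hdet), one_mulVec]⟩
  have hq' (j : ι) : D j * q j = b j + ∑ k, A k j * q k := by
    rw [← hq]
    simp [hMdef, mulVec, dotProduct, sub_mul, Finset.sum_sub_distrib, diagonal_apply]
  refine ⟨q, fun j => ?_, hq'⟩
  by_contra! hj
  set s : Finset ι := {k | q k < 0} with hs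
  have hsum : ∑ k, q k * ∑ j ∈ s, A k j ≥ ∑ k ∈ s, q k * ∑ j ∈ s, A k j := by
    refine Finset.sum_le_sum_of_subset_of_nonneg (Finset.subset_univ s) fun k _ hk => ?_
    have : 0 ≤ q k := by simpa [hs] using hk
    exact mul_nonneg this (Finset.sum_nonneg fun j _ => hA k j)
  have hlt : ∑ k ∈ s, D k * q k < ∑ k ∈ s, q k * ∑ j ∈ s, A k j := by
    refine Finset.sum_lt_sum_of_nonempty ⟨j, by simpa [hs] using hj⟩ fun k hk => ?_
    have hk' : q k < 0 := by simpa [hs] using hk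
    have : ∑ j ∈ s, A k j ≤ ∑ j, A k j :=
      Finset.sum_le_sum_of_subset_of_nonneg (Finset.subset_univ s) fun j _ _ => hA k j
    nlinarith [hD k]
  have hexp : ∑ k ∈ s, D k * q k = ∑ k ∈ s, b k + ∑ k, q k * ∑ j ∈ s, A k j := by
    rw [Finset.sum_congr rfl fun k _ => hq' k, Finset.sum_add_distrib, Finset.sum_comm]
    simp_rw [Finset.mul_sum, mul_comm]
  linarith [Finset.sum_nonneg fun k (_ : k ∈ s) => hb k]

/-- Splits a sum over streams into a sum over links and a sum over selected streams of one link. -/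
lemma sum_streams {L : ℕ} (m : Fin L → ℕ) (c : Fin L → ℝ) (l : Fin L) (p : ℕ → Prop)
    [DecidablePred p] (f : (Σ k, Fin (m k)) → ℝ) :
    ∑ k : Σ k, Fin (m k), (c k.1 + if k.1 = l ∧ p k.2 then 1 else 0) * f k =
      ∑ k, ∑ i, c k * f ⟨k, i⟩ + ∑ i ∈ Finset.univ.filter (fun i : Fin (m l) => p i), f ⟨l, i⟩ := by
  simp_rw [add_mul, Finset.sum_add_distrib, Fintype.sum_sigma]
  congr 1
  rw [Finset.sum_eq_single l (fun k _ hk => by simp [hk]) (by simp)]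
  simp [Finset.sum_filter]

section Streams

variable {L : ℕ} (m n : Fin L → ℕ) (H : ∀ l k : Fin L, Matrix (Fin (n l)) (Fin (m k)) ℂ)
  (Φ : Fin L → Fin L → ℝ) (Wn : ∀ l : Fin L, Matrix (Fin (n l)) (Fin (n l)) ℂ)

lemma posDef_genOmega (hΦ : ∀ l k, 0 ≤ Φ l k) (hWn : ∀ l, (Wn l).PosDef)
    {S : ∀ k : Fin L, Matrix (Fin (m k)) (Fin (m k)) ℂ} (hS : ∀ k, (S k).PosSemidef) (l : Fin L) :
    (genOmega m n H Φ Wn S l).PosDef :=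
  (hWn l).add_posSemidef <| posSemidef_sum _ fun k _ =>
    ((hS k).mul_mul_conjTranspose_same (H l k)).smul (hΦ l k)

lemma qform_genOmega_add_sum_rankOne {d : Fin L → ℕ} (v : ∀ k, Fin (d k) → Fin (m k) → ℂ)
    (l : Fin L) (s : Finset (Fin (d l))) (y : Fin (n l) → ℂ) :
    qform (genOmega m n H Φ Wn (fun k => ∑ i, rankOne (v k i)) l
        + ∑ i ∈ s, rankOne (H l l *ᵥ v l i)) y =
      qform (Wn l) y + (∑ k, ∑ i, Φ l k * gain y (H l k) (v k i)
        + ∑ i ∈ s, gain y (H l l) (v l i)) := by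
  simp_rw [genOmega, conj_sum_rankOne, qform_add, qform_sum, qform_smul, qform_sum,
    qform_rankOne_mulVec, Finset.mul_sum, add_assoc]

lemma sum_trace_rankOne {d : Fin L → ℕ} (v : ∀ k, Fin (d k) → Fin (n k) → ℂ) :
    ∑ l, (trace ((∑ i, rankOne (v l i)) * Wn l)).re =
      ∑ j : Σ l, Fin (d l), qform (Wn j.1) (v j.1 j.2) := by
  simp_rw [Fintype.sum_sigma, Matrix.sum_mul, trace_sum, Complex.re_sum, trace_rankOne_mul]

/-- Every rate vector achievable in a network is achievable in its dual network. -/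
lemma genRegion_subset_dual (hΦ : ∀ l k, 0 ≤ Φ l k)
    (Wc : ∀ k : Fin L, Matrix (Fin (m k)) (Fin (m k)) ℂ)
    (hWc : ∀ k, (Wc k).PosDef) (hWn : ∀ l, (Wn l).PosDef) (PT : ℝ) :
    genRegion m n H Φ Wc Wn PT ⊆
      genRegion n m (fun l k => (H k l)ᴴ) (fun l k => Φ k l) Wn Wc PT := by
  rintro R ⟨hR, S, hS, hpow, hrate⟩
  choose v hv using fun k => exists_eq_sum_rankOne (hS k)
  obtain rfl : S = fun k => ∑ i, rankOne (v k i) := funext hv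
  set Ω := genOmega m n H Φ Wn (fun k => ∑ i, rankOne (v k i))
  have hΩpd (l : Fin L) : (Ω l).PosDef := posDef_genOmega m n H Φ Wn hΦ hWn hS l
  -- interference left at a stream once the earlier streams of its link are decoded
  let Ωs (l : Fin L) (i : Fin (m l)) := Ω l + ∑ k with i < k, rankOne (H l l *ᵥ v l k)
  have hΩs (l : Fin L) (i : Fin (m l)) : (Ωs l i).PosDef :=
    (hΩpd l).add_posSemidef (posSemidef_sum_rankOne _ _)
  let r (l : Fin L) (i : Fin (m l)) := (Ωs l i)⁻¹ *ᵥ (H l l *ᵥ v l i)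
  let γ (l : Fin L) (i : Fin (m l)) := qform (Ωs l i)⁻¹ (H l l *ᵥ v l i)
  have hγ (l : Fin L) (i : Fin (m l)) : 0 ≤ γ l i := qform_nonneg (hΩs l i).inv.posSemidef _
  have hγr (l : Fin L) (i : Fin (m l)) : qform (Ωs l i) (r l i) = γ l i :=
    qform_inv_mulVec (hΩs l i) _
  let A (j k : Σ l, Fin (m l)) : ℝ :=
    (Φ j.1 k.1 + if k.1 = j.1 ∧ (j.2 : ℕ) < k.2 then 1 else 0) *
      gain (r j.1 j.2) (H j.1 k.1) (v k.1 k.2)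
  let D (j : Σ l, Fin (m l)) : ℝ := if γ j.1 j.2 = 0 then 1 else γ j.1 j.2
  have hA (j k : Σ l, Fin (m l)) : 0 ≤ A j k :=
    mul_nonneg (add_nonneg (hΦ _ _) (by split_ifs <;> norm_num)) (gain_nonneg _ _ _)
  have hrow (j : Σ l, Fin (m l)) :
      γ j.1 j.2 = qform (Wn j.1) (r j.1 j.2) + ∑ k, A j k := by
    rw [← hγr, qform_genOmega_add_sum_rankOne, sum_streams m (Φ j.1) j.1 (fun i => (j.2 : ℕ) < i)
      fun k => gain (r j.1 j.2) (H j.1 k.1) (v k.1 k.2)]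
    rfl
  have hD (j : Σ l, Fin (m l)) : ∑ k, A j k < D j := by
    have h0 := qform_nonneg (hWn j.1).posSemidef (r j.1 j.2)
    by_cases h : γ j.1 j.2 = 0
    · simp only [D, if_pos h]
      linarith [hrow j]
    · have hr : r j.1 j.2 ≠ 0 := fun hr => h (by rw [← hγr, hr]; simp [qform])
      simp only [D, if_neg h]
      linarith [hrow j, qform_pos (hWn j.1) hr]
  obtain ⟨q, hq, hcol⟩ := exists_nonneg_solution_transpose D A hA hD
    (fun j => qform (Wc j.1) (v j.1 j.2)) fun j => qform_nonneg (hWc j.1).posSemidef _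
  let w (l : Fin L) (i : Fin (m l)) : Fin (n l) → ℂ := ((√(q ⟨l, i⟩) : ℝ) : ℂ) • r l i
  have hgain (k l : Fin L) (i : Fin (m k)) (i' : Fin (m l)) :
      gain (v l i') (H k l)ᴴ (w k i) = q ⟨k, i⟩ * gain (r k i) (H k l) (v l i') := by
    rw [gain_smul_right, Real.sq_sqrt (hq _), gain_conjTranspose]
  have hSd (k : Fin L) : (∑ i, rankOne (w k i)).PosSemidef := posSemidef_sum_rankOne _ _
  have hΩd := posDef_genOmega n m (fun l k => (H k l)ᴴ) (fun l k => Φ k l) Wc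
    (fun l k => hΦ k l) hWc hSd
  refine ⟨hR, fun k => ∑ i, rankOne (w k i), hSd, ?_, fun l => (hrate l).trans ?_⟩
  · refine le_trans ?_ hpow
    rw [sum_trace_rankOne, sum_trace_rankOne]
    have hw (j : Σ l, Fin (m l)) :
        qform (Wn j.1) (w j.1 j.2) = q j * qform (Wn j.1) (r j.1 j.2) := by
      rw [qform_smul_right, Real.sq_sqrt (hq _)]
    calc ∑ j : Σ l, Fin (m l), qform (Wn j.1) (w j.1 j.2)
        ≤ ∑ j, q j * (D j - ∑ k, A j k) := by
          refine Finset.sum_le_sum fun j _ => ?_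
          rw [hw]
          refine mul_le_mul_of_nonneg_left ?_ (hq j)
          have : γ j.1 j.2 ≤ D j := by
            simp only [D]
            split_ifs with h
            · rw [h]
              exact zero_le_one
            · exact le_rfl
          linarith [hrow j]
      _ = ∑ j, (D j * q j - ∑ k, A k j * q k) := by
          simp_rw [mul_sub, Finset.sum_sub_distrib, Finset.mul_sum]
          rw [Finset.sum_comm (f := fun j k => A k j * q k)]
          simp_rw [mul_comm]
      _ = ∑ j : Σ l, Fin (m l), qform (Wc j.1) (v j.1 j.2) :=
          Finset.sum_congr rfl fun j _ => by rw [hcol j]; ring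
  · unfold genRate
    rw [conj_sum_rankOne, conj_sum_rankOne, log_det_add_sum_rankOne_gt (hΩpd l),
      log_det_add_sum_rankOne (hΩd l)]
    refine Finset.sum_le_sum fun i _ => ?_
    change Real.log (1 + γ l i) ≤ _
    have hpd : (genOmega n m (fun l k => (H k l)ᴴ) (fun l k => Φ k l) Wc
        (fun k => ∑ i, rankOne (w k i)) l + ∑ k with k < i, rankOne ((H l l)ᴴ *ᵥ w l k)).PosDef :=
      (hΩd l).add_posSemidef (posSemidef_sum_rankOne _ _)
    have hγ0 := hγ l i
    refine Real.log_le_log (by positivity) (add_le_add_right ?_ 1)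
    rcases hγ0.eq_or_lt with h | h
    · rw [← h]
      exact qform_nonneg hpd.inv.posSemidef _
    have hDi : D ⟨l, i⟩ = γ l i := if_neg h.ne'
    have hint := qform_genOmega_add_sum_rankOne n m (fun l k => (H k l)ᴴ) (fun l k => Φ k l) Wc w l
      {k | k < i} (v l i)
    have hvi : v l i ≠ 0 := by
      intro h0
      simp [γ, h0, qform] at h
    have hsum := sum_streams m (fun k => Φ k l) l (fun k => k < (i : ℕ))
      fun k => q k * gain (r k.1 k.2) (H k.1 l) (v l i)
    have hA' : ∑ k, A k ⟨l, i⟩ * q k = ∑ k : Σ k, Fin (m k),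
        (Φ k.1 l + if k.1 = l ∧ (k.2 : ℕ) < i then 1 else 0) *
          (q k * gain (r k.1 k.2) (H k.1 l) (v l i)) := by
      refine Finset.sum_congr rfl fun k _ => ?_
      simp only [A, eq_comm (a := l)]
      ring
    simp only [hgain] at hint
    have hval := hint.trans (congrArg _ (hsum.symm.trans hA'.symm))
    rw [← hcol ⟨l, i⟩, hDi] at hval
    have hcs := gain_le_qform_mul_qform_inv hpd (v l i) (H l l)ᴴ (w l i)
    rw [hval, hgain, gain_inv_mulVec (hΩs l i)] at hcs
    have hpos := qform_pos hpd hvi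
    rw [hval] at hpos
    refine le_of_mul_le_mul_left (le_trans (le_of_eq ?_) hcs) hpos
    ring

end Streams

/-- Duality with a linear constraint and colored noise: the achievable rate
region equals that of the dual network. -/
theorem stmt8 {L : ℕ} (hL : 1 ≤ L) (m n : Fin L → ℕ)
    (H : ∀ l k : Fin L, Matrix (Fin (n l)) (Fin (m k)) ℂ)
    (Φ : Fin L → Fin L → ℝ)
    (hΦ : ∀ l k, Φ l k = 0 ∨ Φ l k = 1) (hΦd : ∀ l, Φ l l = 0)
    (Wc : ∀ k : Fin L, Matrix (Fin (m k)) (Fin (m k)) ℂ)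
    (Wn : ∀ l : Fin L, Matrix (Fin (n l)) (Fin (n l)) ℂ)
    (hWc : ∀ k, (Wc k).PosDef) (hWn : ∀ l, (Wn l).PosDef)
    (PT : ℝ) (hPT : 0 < PT) :
    genRegion m n H Φ Wc Wn PT
      = genRegion n m (fun l k => (H k l)ᴴ) (fun l k => Φ k l) Wn Wc PT := by
  have hΦ0 (l k : Fin L) : 0 ≤ Φ l k := by
    rcases hΦ l k with h | h <;> simp [h]
  refine (genRegion_subset_dual m n H Φ Wn hΦ0 Wc hWc hWn PT).antisymm ?_
  have h := genRegion_subset_dual n m (fun l k => (H k l)ᴴ) (fun l k => Φ k l) Wc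
    (fun l k => hΦ0 k l) Wn hWn hWc PT
  simpa only [conjTranspose_conjTranspose] using h
end
end

section
/- If H_{1,2} and H_{2,2} are invertible, H_{2,2}^† H_{2,2} − H_{1,2}^† H_{1,2} is positive semidefinite, and w_1 ≤ w_2, then the weighted sum-rate f is a concave function on the convex set of pairs (Σ_1, Σ_2) of Hermitian positive semidefinite matrices. -/
open Matrix ComplexOrder

noncomputable section

namespace Matrix

variable {n : Type*} [Fintype n] [DecidableEq n]

theorem PosDef.det_re_pos {A : Matrix n n ℂ} (hA : A.PosDef) : 0 < A.det.re :=
  (Complex.pos_iff.mp hA.det_pos).1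

theorem PosDef.det_eq_re {A : Matrix n n ℂ} (hA : A.PosDef) : A.det = (A.det.re : ℂ) :=
  Complex.ext rfl (by simpa using (Complex.pos_iff.mp hA.det_pos).2.symm)

theorem PosDef.log_det_le_trace {A : Matrix n n ℂ} (hA : A.PosDef) :
    Real.log A.det.re ≤ A.trace.re - Fintype.card n := by
  have hdet : A.det.re = ∏ i, hA.1.eigenvalues i := by
    rw [hA.1.det_eq_prod_eigenvalues]
    simp [← Complex.ofReal_prod]
  have htr : A.trace.re = ∑ i, hA.1.eigenvalues i := by
    rw [hA.1.trace_eq_sum_eigenvalues]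
    simp
  rw [hdet, htr, Real.log_prod fun i _ => (hA.eigenvalues_pos i).ne']
  calc ∑ i, Real.log (hA.1.eigenvalues i)
      ≤ ∑ i, (hA.1.eigenvalues i - 1) :=
        Finset.sum_le_sum fun i _ => Real.log_le_sub_one_of_pos (hA.eigenvalues_pos i)
    _ = _ := by simp

open scoped MatrixOrder Matrix.Norms.L2Operator in
theorem PosSemidef.exists_eq_conjTranspose_mul_self {A : Matrix n n ℂ} (hA : A.PosSemidef) :
    ∃ E : Matrix n n ℂ, A = Eᴴ * E :=
  CStarAlgebra.nonneg_iff_eq_star_mul_self.mp hA.nonneg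

theorem PosDef.exists_inv_eq_conjTranspose_mul_self {B : Matrix n n ℂ} (hB : B.PosDef) :
    ∃ E : Matrix n n ℂ, IsUnit E ∧ B⁻¹ = Eᴴ * E := by
  obtain ⟨E, hE⟩ := hB.inv.posSemidef.exists_eq_conjTranspose_mul_self
  refine ⟨E, ?_, hE⟩
  have h := hB.inv.isUnit
  rw [hE, isUnit_iff_isUnit_det, det_mul] at h
  exact (isUnit_iff_isUnit_det _).mpr (isUnit_of_mul_isUnit_right h)

/-- The supporting hyperplane inequality of `log det`. -/
theorem PosDef.log_det_sub_log_det_le {A B : Matrix n n ℂ} (hA : A.PosDef) (hB : B.PosDef) :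
    Real.log A.det.re - Real.log B.det.re ≤ (B⁻¹ * A).trace.re - Fintype.card n := by
  obtain ⟨E, hE, hBE⟩ := hB.exists_inv_eq_conjTranspose_mul_self
  have hP : (E * A * Eᴴ).PosDef := (IsUnit.posDef_star_right_conjugate_iff hE).mpr hA
  have htr : (E * A * Eᴴ).trace = (B⁻¹ * A).trace := by
    rw [trace_mul_comm, ← Matrix.mul_assoc, ← hBE]
  have hdet : (E * A * Eᴴ).det * B.det = A.det := by
    have h1 : (Eᴴ * E).det * B.det = 1 := by
      rw [← hBE, ← det_mul, nonsing_inv_mul _ hB.det_pos.ne'.isUnit, det_one]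
    rw [det_mul] at h1
    rw [det_mul, det_mul]
    linear_combination A.det * h1
  have hre : (E * A * Eᴴ).det.re * B.det.re = A.det.re := by
    have := hdet
    rw [hP.det_eq_re, hB.det_eq_re, hA.det_eq_re] at this
    exact_mod_cast this
  have := hP.log_det_le_trace
  rw [← hre, Real.log_mul hP.det_re_pos.ne' hB.det_re_pos.ne', ← htr]
  linarith

/-- `log det` is concave and monotone with respect to the Loewner order. -/
theorem PosDef.log_det_concave_of_le {A B C : Matrix n n ℂ} (hA : A.PosDef) (hB : B.PosDef)
    (hC : C.PosDef) {t : ℝ} (ht0 : 0 ≤ t) (ht1 : t ≤ 1)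
    (hle : (C - (t • A + (1 - t) • B)).PosSemidef) :
    t * Real.log A.det.re + (1 - t) * Real.log B.det.re ≤ Real.log C.det.re := by
  obtain ⟨E, -, hCE⟩ := hC.exists_inv_eq_conjTranspose_mul_self
  have h0 : 0 ≤ (C⁻¹ * (C - (t • A + (1 - t) • B))).trace.re := by
    rw [hCE, Matrix.mul_assoc, trace_mul_comm]
    exact (Complex.nonneg_iff.mp (hle.mul_mul_conjTranspose_same E).trace_nonneg).1
  have h1 : (C⁻¹ * (C - (t • A + (1 - t) • B))).trace.re
      = Fintype.card n - (t * (C⁻¹ * A).trace.re + (1 - t) * (C⁻¹ * B).trace.re) := by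
    rw [Matrix.mul_sub, nonsing_inv_mul _ hC.det_pos.ne'.isUnit, Matrix.mul_add,
      Matrix.mul_smul, Matrix.mul_smul]
    simp
  have hA' := mul_le_mul_of_nonneg_left (hA.log_det_sub_log_det_le hC) ht0
  have hB' := mul_le_mul_of_nonneg_left (hB.log_det_sub_log_det_le hC) (sub_nonneg.mpr ht1)
  linarith

theorem PosSemidef.convexCombo {k : Type*} {A B : Matrix k k ℂ} (hA : A.PosSemidef)
    (hB : B.PosSemidef) {t : ℝ} (ht0 : 0 ≤ t) (ht1 : t ≤ 1) : (t • A + (1 - t) • B).PosSemidef :=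
  (hA.smul ht0).add (hB.smul (sub_nonneg.mpr ht1))

theorem PosDef.convexCombo {k : Type*} {A B : Matrix k k ℂ} (hA : A.PosDef) (hB : B.PosDef)
    {t : ℝ} (ht0 : 0 ≤ t) (ht1 : t ≤ 1) : (t • A + (1 - t) • B).PosDef := by
  rcases ht0.eq_or_lt with rfl | ht
  · simpa using hB
  · exact (hA.smul ht).add_posSemidef (hB.posSemidef.smul (sub_nonneg.mpr ht1))

theorem PosDef.log_det_concave {A B : Matrix n n ℂ} (hA : A.PosDef) (hB : B.PosDef)
    {t : ℝ} (ht0 : 0 ≤ t) (ht1 : t ≤ 1) :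
    t * Real.log A.det.re + (1 - t) * Real.log B.det.re
      ≤ Real.log (t • A + (1 - t) • B).det.re :=
  hA.log_det_concave_of_le hB (hA.convexCombo hB ht0 ht1) ht0 ht1 (by simpa using PosSemidef.zero)

theorem PosDef.posSemidef_fromBlocks_one_iff {A B : Matrix n n ℂ} (hA : A.PosDef) :
    (fromBlocks A 1 1 B).PosSemidef ↔ (B - A⁻¹).PosSemidef := by
  have := hA.isUnit.invertible
  simpa using PosDef.fromBlocks₁₁ (1 : Matrix n n ℂ) B hA

theorem PosDef.inv_sub_inv_posSemidef {A B : Matrix n n ℂ} (hA : A.PosDef) (hB : B.PosDef)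
    (h : (B - A).PosSemidef) : (A⁻¹ - B⁻¹).PosSemidef := by
  rw [← hB.posSemidef_fromBlocks_one_iff]
  have := hA.inv.isUnit.invertible
  have := PosDef.fromBlocks₂₂ B (1 : Matrix n n ℂ) hA.inv
  simp only [conjTranspose_one, Matrix.one_mul, Matrix.mul_one,
    nonsing_inv_nonsing_inv _ hA.det_pos.ne'.isUnit] at this
  exact this.mpr h

/-- Operator convexity of the matrix inverse. -/
theorem PosDef.inv_convex {A B : Matrix n n ℂ} (hA : A.PosDef) (hB : B.PosDef)
    {t : ℝ} (ht0 : 0 ≤ t) (ht1 : t ≤ 1) :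
    (t • A⁻¹ + (1 - t) • B⁻¹ - (t • A + (1 - t) • B)⁻¹).PosSemidef := by
  rw [← (hA.convexCombo hB ht0 ht1).posSemidef_fromBlocks_one_iff]
  have h1 := hA.posSemidef_fromBlocks_one_iff (B := A⁻¹) |>.mpr (by simpa using PosSemidef.zero)
  have h2 := hB.posSemidef_fromBlocks_one_iff (B := B⁻¹) |>.mpr (by simpa using PosSemidef.zero)
  have h := h1.convexCombo h2 ht0 ht1
  rw [fromBlocks_smul, fromBlocks_smul, fromBlocks_add] at h
  simpa [← add_smul] using h

theorem PosDef.one_sub_mul_inv_mul {X E : Matrix n n ℂ} (hX : X.PosDef) :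
    (1 - E * (X + Eᴴ * E)⁻¹ * Eᴴ).PosDef ∧
      Real.log (1 - E * (X + Eᴴ * E)⁻¹ * Eᴴ).det.re
        = Real.log X.det.re - Real.log (X + Eᴴ * E).det.re := by
  have hY : (X + Eᴴ * E).PosDef := hX.add_posSemidef (posSemidef_conjTranspose_mul_self E)
  have hdet : (X + Eᴴ * E).det * (1 - E * (X + Eᴴ * E)⁻¹ * Eᴴ).det = X.det := by
    rw [Matrix.mul_assoc, det_one_sub_mul_comm, ← det_mul, Matrix.mul_sub, Matrix.mul_assoc,
      mul_nonsing_inv_cancel_left _ _ hY.det_pos.ne'.isUnit]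
    simp
  have hpsd : (1 - E * (X + Eᴴ * E)⁻¹ * Eᴴ).PosSemidef := by
    have := hY.isUnit.invertible
    have h := (PosDef.fromBlocks₁₁ (Eᴴ) 1 hY).mp
    rw [conjTranspose_conjTranspose] at h
    apply h
    have : Invertible (1 : Matrix n n ℂ) := invertibleOne
    have h' := (PosDef.fromBlocks₂₂ (X + Eᴴ * E) Eᴴ (PosDef.one (n := n) (R := ℂ))).mpr
    rw [conjTranspose_conjTranspose] at h'
    exact h' (by simpa using hX.posSemidef)
  have hP := hpsd.posDef_iff_det_ne_zero.mpr fun h0 => hX.det_pos.ne' (by rw [← hdet, h0, mul_zero])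
  refine ⟨hP, ?_⟩
  have hre : (X + Eᴴ * E).det.re * (1 - E * (X + Eᴴ * E)⁻¹ * Eᴴ).det.re = X.det.re := by
    rw [hP.det_eq_re, hY.det_eq_re, hX.det_eq_re] at hdet
    exact_mod_cast hdet
  rw [← hre, Real.log_mul hY.det_re_pos.ne' hP.det_re_pos.ne']
  ring

/-- `X ↦ log det X - log det (X + D)` is concave for positive semidefinite `D`. -/
theorem PosDef.log_det_sub_log_det_add_concave {X Y D : Matrix n n ℂ} (hX : X.PosDef)
    (hY : Y.PosDef) (hD : D.PosSemidef) {t : ℝ} (ht0 : 0 ≤ t) (ht1 : t ≤ 1) :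
    t * (Real.log X.det.re - Real.log (X + D).det.re)
        + (1 - t) * (Real.log Y.det.re - Real.log (Y + D).det.re)
      ≤ Real.log (t • X + (1 - t) • Y).det.re
        - Real.log (t • X + (1 - t) • Y + D).det.re := by
  obtain ⟨E, rfl⟩ := hD.exists_eq_conjTranspose_mul_self
  obtain ⟨hX', hXe⟩ := hX.one_sub_mul_inv_mul (E := E)
  obtain ⟨hY', hYe⟩ := hY.one_sub_mul_inv_mul (E := E)
  obtain ⟨hZ', hZe⟩ := (hX.convexCombo hY ht0 ht1).one_sub_mul_inv_mul (E := E)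
  rw [← hXe, ← hYe, ← hZe]
  refine hX'.log_det_concave_of_le hY' hZ' ht0 ht1 ?_
  have h := ((hX.add_posSemidef hD).inv_convex (hY.add_posSemidef hD) ht0 ht1
    ).mul_mul_conjTranspose_same E
  have hsum : t • (X + Eᴴ * E) + (1 - t) • (Y + Eᴴ * E)
      = t • X + (1 - t) • Y + Eᴴ * E := by module
  rw [hsum] at h
  convert h using 1
  simp only [Matrix.mul_sub, Matrix.sub_mul, Matrix.mul_add, Matrix.add_mul, Matrix.mul_smul,
    Matrix.smul_mul]
  module

theorem PosSemidef.one_add_mul_mul_conjTranspose_posDef {k : Type*} [Fintype k]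
    {S : Matrix k k ℂ} (hS : S.PosSemidef) (H : Matrix n k ℂ) : (1 + H * S * Hᴴ).PosDef :=
  PosDef.one.add_posSemidef (hS.mul_mul_conjTranspose_same H)

theorem PosSemidef.log_det_one_add_mul_mul_conjTranspose {S H : Matrix n n ℂ} (hS : S.PosSemidef)
    (hH : IsUnit H) :
    ((Hᴴ * H)⁻¹ + S).PosDef ∧ Real.log (1 + H * S * Hᴴ).det.re
      = Real.log (H * Hᴴ).det.re + Real.log ((Hᴴ * H)⁻¹ + S).det.re := by
  have hH' : IsUnit Hᴴ := (isUnit_conjTranspose H).mpr hH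
  have hM : (Hᴴ * H).PosDef := PosDef.conjTranspose_mul_self H (mulVec_injective_of_isUnit hH)
  have hN : (H * Hᴴ).PosDef := by
    simpa using PosDef.conjTranspose_mul_self Hᴴ (mulVec_injective_of_isUnit hH')
  have hP : ((Hᴴ * H)⁻¹ + S).PosDef := hM.inv.add_posSemidef hS
  have hQ := hS.one_add_mul_mul_conjTranspose_posDef H
  have heq : 1 + H * S * Hᴴ = H * ((Hᴴ * H)⁻¹ + S) * Hᴴ := by
    rw [Matrix.mul_add, Matrix.add_mul, mul_inv_rev, ← Matrix.mul_assoc,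
      mul_nonsing_inv _ ((isUnit_iff_isUnit_det _).mp hH), Matrix.one_mul,
      nonsing_inv_mul _ ((isUnit_iff_isUnit_det _).mp hH')]
  have hdet : (1 + H * S * Hᴴ).det = (H * Hᴴ).det * ((Hᴴ * H)⁻¹ + S).det := by
    rw [heq, det_mul, det_mul, det_mul]
    ring
  refine ⟨hP, ?_⟩
  have hre : (1 + H * S * Hᴴ).det.re = (H * Hᴴ).det.re * ((Hᴴ * H)⁻¹ + S).det.re := by
    rw [hQ.det_eq_re, hP.det_eq_re, hN.det_eq_re] at hdet
    exact_mod_cast hdet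
  rw [hre, Real.log_mul hN.det_re_pos.ne' hP.det_re_pos.ne']

end Matrix

/-- Concavity of the weighted sum-rate of a two-user Z channel when
`H₂₂ᴴH₂₂ ⪰ H₁₂ᴴH₁₂`, the channels are invertible, and `w₁ ≤ w₂`. -/
theorem stmt11 {m m1 : ℕ}
    (H11 : Matrix (Fin m) (Fin m1) ℂ)
    (H12 H22 : Matrix (Fin m) (Fin m) ℂ)
    (hH12 : IsUnit H12) (hH22 : IsUnit H22)
    (hdom : (H22ᴴ * H22 - H12ᴴ * H12).PosSemidef)
    (w1 w2 : ℝ) (hw1 : 0 ≤ w1) (hw2 : 0 ≤ w2) (hw : w1 ≤ w2)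
    (f : Matrix (Fin m1) (Fin m1) ℂ → Matrix (Fin m) (Fin m) ℂ → ℝ)
    (hf : ∀ S1 S2, f S1 S2 =
      w1 * (Real.log ((1 + H12 * S2 * H12ᴴ + H11 * S1 * H11ᴴ).det.re)
          - Real.log ((1 + H12 * S2 * H12ᴴ).det.re))
        + w2 * Real.log ((1 + H22 * S2 * H22ᴴ).det.re)) :
    ∀ (S1 : Matrix (Fin m1) (Fin m1) ℂ) (S2 : Matrix (Fin m) (Fin m) ℂ)
      (Z1 : Matrix (Fin m1) (Fin m1) ℂ) (Z2 : Matrix (Fin m) (Fin m) ℂ),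
      S1.PosSemidef → S2.PosSemidef → Z1.PosSemidef → Z2.PosSemidef →
      ∀ t : ℝ, 0 ≤ t → t ≤ 1 →
        t * f S1 S2 + (1 - t) * f Z1 Z2
          ≤ f (t • S1 + (1 - t) • Z1) (t • S2 + (1 - t) • Z2) := by
  intro S1 S2 Z1 Z2 hS1 hS2 hZ1 hZ2 t ht0 ht1
  have hW2 := hS2.convexCombo hZ2 ht0 ht1
  have total := ((hS2.one_add_mul_mul_conjTranspose_posDef H12).add_posSemidef
    (hS1.mul_mul_conjTranspose_same H11)).log_det_concave
    ((hZ2.one_add_mul_mul_conjTranspose_posDef H12).add_posSemidef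
    (hZ1.mul_mul_conjTranspose_same H11)) ht0 ht1
  have htotal : t • (1 + H12 * S2 * H12ᴴ + H11 * S1 * H11ᴴ)
      + (1 - t) • (1 + H12 * Z2 * H12ᴴ + H11 * Z1 * H11ᴴ)
      = 1 + H12 * (t • S2 + (1 - t) • Z2) * H12ᴴ + H11 * (t • S1 + (1 - t) • Z1) * H11ᴴ := by
    simp only [Matrix.mul_add, Matrix.add_mul, Matrix.mul_smul, Matrix.smul_mul]
    module
  rw [htotal] at total
  have hD : ((H12ᴴ * H12)⁻¹ - (H22ᴴ * H22)⁻¹).PosSemidef :=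
    (PosDef.conjTranspose_mul_self H12 (mulVec_injective_of_isUnit hH12)).inv_sub_inv_posSemidef
      (PosDef.conjTranspose_mul_self H22 (mulVec_injective_of_isUnit hH22)) hdom
  obtain ⟨hSp, hS⟩ := hS2.log_det_one_add_mul_mul_conjTranspose hH22
  obtain ⟨hZp, hZ⟩ := hZ2.log_det_one_add_mul_mul_conjTranspose hH22
  have hW := (hW2.log_det_one_add_mul_mul_conjTranspose hH22).2
  have hS' := (hS2.log_det_one_add_mul_mul_conjTranspose hH12).2
  have hZ' := (hZ2.log_det_one_add_mul_mul_conjTranspose hH12).2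
  have hW' := (hW2.log_det_one_add_mul_mul_conjTranspose hH12).2
  have direct := hSp.log_det_concave hZp ht0 ht1
  have diff := hSp.log_det_sub_log_det_add_concave hZp hD ht0 ht1
  have hcombo : t • ((H22ᴴ * H22)⁻¹ + S2) + (1 - t) • ((H22ᴴ * H22)⁻¹ + Z2)
      = (H22ᴴ * H22)⁻¹ + (t • S2 + (1 - t) • Z2) := by module
  have hshift (S : Matrix (Fin m) (Fin m) ℂ) :
      (H22ᴴ * H22)⁻¹ + S + ((H12ᴴ * H12)⁻¹ - (H22ᴴ * H22)⁻¹) = (H12ᴴ * H12)⁻¹ + S := by abel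
  rw [hcombo] at direct diff
  simp only [hshift] at diff
  simp only [hf]
  rw [hS, hZ, hW, hS', hZ', hW']
  linear_combination w1 * total + w1 * diff + (w2 - w1) * direct
end
end

section
/- Let A, B ∈ ℂ^{n×n} be Hermitian with B positive definite and A − B positive semidefinite, and let Y ∈ ℂ^{n×n} be Hermitian. Then Tr(AYAY) and Tr(BYBY) are real numbers and Tr(AYAY) ≥ Tr(BYBY). -/
open Matrix ComplexOrder

noncomputable section

/-- The trace of the product of two positive semidefinite matrices is nonnegative. -/
theorem trace_mul_nonneg_of_posSemidef {m : Type*} [Fintype m] {P Q : Matrix m m ℂ}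
    (hP : P.PosSemidef) (hQ : Q.PosSemidef) : 0 ≤ (P * Q).trace := by
  classical
  open scoped MatrixOrder in
  obtain ⟨C, rfl⟩ := CStarAlgebra.nonneg_iff_eq_star_mul_self.mp hP.nonneg
  rw [star_eq_conjTranspose, Matrix.mul_assoc, Matrix.trace_mul_comm]
  exact (hQ.mul_mul_conjTranspose_same C).trace_nonneg

/-- `Tr(PYPY)` is real for Hermitian `P` and `Y`. -/
theorem im_trace_mul_mul_mul_eq_zero {m : Type*} [Fintype m] {P Y : Matrix m m ℂ}
    (hP : P.IsHermitian) (hY : Y.IsHermitian) : (P * Y * P * Y).trace.im = 0 := by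
  rw [← Complex.conj_eq_iff_im, starRingEnd_apply, ← trace_conjTranspose]
  simp only [conjTranspose_mul, hP.eq, hY.eq]
  rw [Matrix.trace_mul_comm]
  simp only [Matrix.mul_assoc]

/-- For Hermitian `A`, positive definite `B` with `A − B` positive
semidefinite, and Hermitian `Y`, the traces `Tr(AYAY)` and `Tr(BYBY)` are real
and `Tr(AYAY) ≥ Tr(BYBY)`. -/
theorem stmt13 {n : ℕ} (A B Y : Matrix (Fin n) (Fin n) ℂ)
    (hA : A.IsHermitian) (hB : B.PosDef) (hAB : (A - B).PosSemidef)
    (hY : Y.IsHermitian) :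
    (Matrix.trace (A * Y * A * Y)).im = 0 ∧
    (Matrix.trace (B * Y * B * Y)).im = 0 ∧
    (Matrix.trace (B * Y * B * Y)).re ≤ (Matrix.trace (A * Y * A * Y)).re := by
  refine ⟨im_trace_mul_mul_mul_eq_zero hA hY, im_trace_mul_mul_mul_eq_zero hB.isHermitian hY, ?_⟩
  have hApos : A.PosSemidef := by simpa using hAB.add hB.posSemidef
  have conj_posSemidef {Q : Matrix (Fin n) (Fin n) ℂ} (hQ : Q.PosSemidef) :
      (Y * Q * Y).PosSemidef := by
    simpa only [hY.eq] using hQ.mul_mul_conjTranspose_same Y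
  have split : A * Y * A * Y - B * Y * B * Y =
      (A - B) * (Y * A * Y) + B * (Y * (A - B) * Y) := by noncomm_ring
  have nonneg : 0 ≤ (A * Y * A * Y - B * Y * B * Y).trace := by
    rw [split, trace_add]
    exact add_nonneg (trace_mul_nonneg_of_posSemidef hAB (conj_posSemidef hApos))
      (trace_mul_nonneg_of_posSemidef hB.posSemidef (conj_posSemidef hAB))
  rw [trace_sub, sub_nonneg] at nonneg
  exact (Complex.le_def.mp nonneg).1
end
end

section
/- Let K ≥ 1, let g ∈ ℝ^K have positive entries, let Ψ ∈ ℝ^{K×K} have nonnegative entries and zero diagonal, and let p ∈ ℝ^K have positive entries. Define the forward SINRs γ_i = p_i g_i / (1 + (Ψp)_i) and the diagonal matrix D with diagonal entries γ_i / g_i. Then D^{-1} − Ψ^T is invertible, the vector q = (D^{-1} − Ψ^T)^{-1} 𝟙 (where 𝟙 is the all-ones vector) has positive entries, Σ_{i=1}^{K} q_i = Σ_{i=1}^{K} p_i, and the reverse SINRs satisfy q_i g_i / (1 + (Ψ^T q)_i) = γ_i for every i; i.e., a set of SINRs achievable in the forward links with sum power P_T is achievable in the reverse links with the same sum power. -/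
open Matrix

noncomputable section

/-- A matrix with nonpositive off-diagonal entries that admits a positive row vector `p` with
`p ᵥ* M` positive is inverse-monotone. -/
lemma Matrix.nonneg_of_mulVec_nonneg_of_vecMul_pos {n : Type*} [Fintype n]
    {M : Matrix n n ℝ} (hM : ∀ i j, i ≠ j → M i j ≤ 0) {p : n → ℝ} (hp : ∀ i, 0 < p i)
    (hpM : ∀ i, 0 < (p ᵥ* M) i) {v : n → ℝ} (hv : ∀ i, 0 ≤ (M *ᵥ v) i) (i : n) : 0 ≤ v i := by
  set w : n → ℝ := fun i => max (-v i) 0 with hw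
  have hw0 : ∀ i, 0 ≤ w i := fun i => le_max_right _ _
  have hMw : ∀ i, (M *ᵥ w) i ≤ 0 := by
    intro i
    rcases le_or_gt 0 (v i) with h | h
    · refine Finset.sum_nonpos fun j _ => ?_
      rcases eq_or_ne i j with rfl | hij
      · simp [hw, h]
      · exact mul_nonpos_of_nonpos_of_nonneg (hM i j hij) (hw0 j)
    · have hsum : (M *ᵥ w) i + (M *ᵥ v) i ≤ 0 := by
        simp only [mulVec, dotProduct, ← Finset.sum_add_distrib, ← mul_add]
        refine Finset.sum_nonpos fun j _ => ?_
        rcases eq_or_ne i j with rfl | hij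
        · simp [hw, h.le]
        · refine mul_nonpos_of_nonpos_of_nonneg (hM i j hij) ?_
          linarith [le_max_left (-v j) 0]
      linarith [hv i]
  have hle : ∑ j, (p ᵥ* M) j * w j ≤ 0 := by
    change (p ᵥ* M) ⬝ᵥ w ≤ 0
    rw [← dotProduct_mulVec]
    exact Finset.sum_nonpos fun j _ => mul_nonpos_of_nonneg_of_nonpos (hp j).le (hMw j)
  have hterm : (p ᵥ* M) i * w i ≤ 0 :=
    (Finset.single_le_sum (f := fun j => (p ᵥ* M) j * w j)
      (fun j _ => mul_nonneg (hpM j).le (hw0 j)) (Finset.mem_univ i)).trans hle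
  have hwi : w i ≤ 0 := nonpos_of_mul_nonpos_right hterm (hpM i)
  linarith [le_max_left (-v i) 0]

lemma Matrix.isUnit_of_vecMul_pos {n : Type*} [Fintype n] [DecidableEq n]
    {M : Matrix n n ℝ} (hM : ∀ i j, i ≠ j → M i j ≤ 0) {p : n → ℝ} (hp : ∀ i, 0 < p i)
    (hpM : ∀ i, 0 < (p ᵥ* M) i) : IsUnit M := by
  rw [isUnit_iff_isUnit_det, isUnit_iff_ne_zero]
  intro hdet
  obtain ⟨v, hv, hMv⟩ := exists_mulVec_eq_zero_iff.mpr hdet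
  refine hv (funext fun i => le_antisymm ?_ ?_)
  · have := nonneg_of_mulVec_nonneg_of_vecMul_pos hM hp hpM (v := -v)
      (by simp [mulVec_neg, hMv]) i
    simpa using this
  · exact nonneg_of_mulVec_nonneg_of_vecMul_pos hM hp hpM (by simp [hMv]) i

/-- SINR duality for scalar streams: SINRs achievable in the forward links
with sum power `P_T` are achievable in the reverse links with the same sum
power, with reverse powers `q = (D⁻¹ − Ψᵀ)⁻¹ 𝟙`. -/
theorem stmt14 {K : ℕ} (hK : 1 ≤ K)
    (g p : Fin K → ℝ) (hg : ∀ i, 0 < g i) (hp : ∀ i, 0 < p i)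
    (Ψ : Matrix (Fin K) (Fin K) ℝ)
    (hΨ : ∀ i k, 0 ≤ Ψ i k) (hΨd : ∀ i, Ψ i i = 0)
    (γ : Fin K → ℝ) (hγ : ∀ i, γ i = p i * g i / (1 + (Ψ *ᵥ p) i)) :
    IsUnit ((Matrix.diagonal fun i => γ i / g i)⁻¹ - Ψᵀ) ∧
    ∀ q : Fin K → ℝ,
      q = ((Matrix.diagonal fun i => γ i / g i)⁻¹ - Ψᵀ)⁻¹ *ᵥ (fun _ => 1) →
      (∀ i, 0 < q i) ∧ (∑ i, q i) = (∑ i, p i) ∧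
      ∀ i, q i * g i / (1 + (Ψᵀ *ᵥ q) i) = γ i := by
  have hden : ∀ i, 0 < 1 + (Ψ *ᵥ p) i := fun i =>
    add_pos_of_pos_of_nonneg one_pos
      (dotProduct_nonneg_of_nonneg (hΨ i) fun k => (hp k).le)
  have hγpos : ∀ i, 0 < γ i := fun i => by
    rw [hγ]
    exact div_pos (mul_pos (hp i) (hg i)) (hden i)
  have hinv : (diagonal fun i => γ i / g i)⁻¹ = diagonal fun i => g i / γ i := by
    refine inv_eq_right_inv ?_
    rw [diagonal_mul_diagonal, ← diagonal_one]
    congr 1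
    funext i
    have := (hg i).ne'
    have := (hγpos i).ne'
    field_simp
  rw [hinv]
  set M : Matrix (Fin K) (Fin K) ℝ := (diagonal fun i => g i / γ i) - Ψᵀ with hMdef
  have hoff : ∀ i j, i ≠ j → M i j ≤ 0 := fun i j hij => by
    simp [hMdef, diagonal_apply_ne _ hij, hΨ j i]
  have hpM : p ᵥ* M = fun _ => 1 := by
    funext i
    have h1 : p i * (g i / γ i) = 1 + (Ψ *ᵥ p) i := by
      have := (hg i).ne'
      have := (hp i).ne'
      have := (hden i).ne'
      rw [hγ]
      field_simp
    rw [hMdef, vecMul_sub, vecMul_transpose, Pi.sub_apply, vecMul_diagonal, h1]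
    ring
  have hpMpos : ∀ i, 0 < (p ᵥ* M) i := fun i => by simp [hpM]
  have hunit : IsUnit M := isUnit_of_vecMul_pos hoff hp hpMpos
  refine ⟨hunit, fun q hq => ?_⟩
  have hMq : M *ᵥ q = fun _ => 1 := by
    rw [hq, mulVec_mulVec, mul_nonsing_inv _ ((isUnit_iff_isUnit_det M).mp hunit), one_mulVec]
  have hq0 : ∀ i, 0 ≤ q i :=
    nonneg_of_mulVec_nonneg_of_vecMul_pos hoff hp hpMpos (by simp [hMq])
  have heq : ∀ i, g i / γ i * q i = 1 + (Ψᵀ *ᵥ q) i := fun i => by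
    have h := congrFun hMq i
    rw [hMdef, sub_mulVec, Pi.sub_apply, mulVec_diagonal] at h
    linarith
  have hden' : ∀ i, 0 < 1 + (Ψᵀ *ᵥ q) i := fun i =>
    add_pos_of_pos_of_nonneg one_pos
      (dotProduct_nonneg_of_nonneg (fun k => hΨ k i) hq0)
  have hqpos : ∀ i, 0 < q i := fun i =>
    pos_of_mul_pos_right ((heq i).symm ▸ hden' i) (div_pos (hg i) (hγpos i)).le
  refine ⟨hqpos, ?_, fun i => ?_⟩
  · have h := dotProduct_mulVec p M q
    rw [hMq, hpM] at h
    simpa [dotProduct] using h.symm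
  · have := (hg i).ne'
    have := (hγpos i).ne'
    have := (hqpos i).ne'
    rw [← heq i]
    field_simp
end
end

section
/- Let H̄ ∈ ℂ^{n×m} have a thin singular value decomposition H̄ = F Δ G^† with F ∈ ℂ^{n×N}, G ∈ ℂ^{m×N}, F^†F = I_N = G^†G, and Δ ∈ ℝ^{N×N} diagonal with positive diagonal entries δ_1,…,δ_N. For ν ≥ 0 let D = (νI_N − Δ^{-2})^+ be the diagonal matrix with entries max(ν − δ_i^{-2}, 0) and let Q = G D G^† (the water-filling input with level ν). Then there exists a Hermitian positive semidefinite Θ ∈ ℂ^{m×m} with Tr(QΘ) = 0 such that ν H̄^† (I_n + H̄ Q H̄^†)^{-1} H̄ + Θ = I_m; i.e., the water-filling covariance satisfies the single-user KKT stationarity condition. -/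
open Matrix ComplexOrder

noncomputable section

/-- Compressing the resolvent of `F diag(e) Fᴴ` to the range of an isometry `F`. -/
theorem conjTranspose_mul_inv_one_add_diagonal_mul {ι κ : Type*} [Fintype ι] [DecidableEq ι]
    [Fintype κ] [DecidableEq κ] {F : Matrix ι κ ℂ} (hF : Fᴴ * F = 1) {e : κ → ℂ}
    (he : ∀ i, 1 + e i ≠ 0) :
    Fᴴ * (1 + F * diagonal e * Fᴴ)⁻¹ * F = diagonal fun i => (1 + e i)⁻¹ := by
  have hF' (X : Matrix κ ι ℂ) : Fᴴ * (F * X) = X := by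
    rw [← Matrix.mul_assoc, hF, Matrix.one_mul]
  have hdiag : diagonal e - diagonal (fun i => e i * (1 + e i)⁻¹)
      - diagonal e * diagonal (fun i => e i * (1 + e i)⁻¹) = 0 := by
    rw [diagonal_mul_diagonal, diagonal_sub, diagonal_sub, diagonal_eq_zero]
    funext i
    have := he i
    simp only [Pi.zero_apply]
    field_simp
    ring
  have hinv : (1 + F * diagonal e * Fᴴ)⁻¹
      = 1 - F * diagonal (fun i => e i * (1 + e i)⁻¹) * Fᴴ := by
    apply Matrix.inv_eq_right_inv
    have h : (1 + F * diagonal e * Fᴴ) * (1 - F * diagonal (fun i => e i * (1 + e i)⁻¹) * Fᴴ)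
        = 1 + F * (diagonal e - diagonal (fun i => e i * (1 + e i)⁻¹)
          - diagonal e * diagonal (fun i => e i * (1 + e i)⁻¹)) * Fᴴ := by
      simp only [Matrix.add_mul, Matrix.mul_sub, Matrix.sub_mul, Matrix.mul_one, Matrix.one_mul,
        Matrix.mul_assoc, hF']
      abel
    rw [h, hdiag, Matrix.mul_zero, Matrix.zero_mul, add_zero]
  rw [hinv]
  simp only [Matrix.mul_sub, Matrix.sub_mul, Matrix.mul_one, Matrix.mul_assoc, hF, hF']
  rw [← diagonal_one, diagonal_sub]
  congr 1
  funext i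
  have := he i
  field_simp
  ring

/-- The projection onto the orthogonal complement of the range of an isometry is positive
semidefinite. -/
theorem posSemidef_one_sub_mul_conjTranspose {ι κ : Type*} [Fintype ι] [DecidableEq ι]
    [Fintype κ] [DecidableEq κ] {G : Matrix ι κ ℂ} (hG : Gᴴ * G = 1) :
    (1 - G * Gᴴ).PosSemidef := by
  have h : (1 - G * Gᴴ)ᴴ * (1 - G * Gᴴ) = 1 - G * Gᴴ := by
    have hG' : Gᴴ * (G * Gᴴ) = Gᴴ := by rw [← Matrix.mul_assoc, hG, Matrix.one_mul]
    simp [Matrix.mul_sub, Matrix.sub_mul, Matrix.mul_assoc, hG']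
  rw [← h]
  exact posSemidef_conjTranspose_mul_self _

/-- The single-user water-filling covariance `Q = G D Gᴴ` with level `ν`
satisfies the KKT stationarity condition
`ν H̄ᴴ(I + H̄QH̄ᴴ)⁻¹H̄ + Θ = I` with `Θ ⪰ 0` and `Tr(QΘ) = 0`. -/
theorem stmt16 {n' m' N : ℕ}
    (Hbar : Matrix (Fin n') (Fin m') ℂ)
    (F : Matrix (Fin n') (Fin N) ℂ) (G : Matrix (Fin m') (Fin N) ℂ)
    (δ : Fin N → ℝ) (hδ : ∀ i, 0 < δ i)
    (hF : Fᴴ * F = 1) (hG : Gᴴ * G = 1)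
    (hSVD : Hbar = F * Matrix.diagonal (fun i => (δ i : ℂ)) * Gᴴ)
    (ν : ℝ) (hν : 0 ≤ ν)
    (Q : Matrix (Fin m') (Fin m') ℂ)
    (hQ : Q = G * Matrix.diagonal
        (fun i => ((max (ν - ((δ i) ^ 2)⁻¹) 0 : ℝ) : ℂ)) * Gᴴ) :
    ∃ Θ : Matrix (Fin m') (Fin m') ℂ, Θ.PosSemidef ∧
      Matrix.trace (Q * Θ) = 0 ∧
      ν • (Hbarᴴ * (1 + Hbar * Q * Hbarᴴ)⁻¹ * Hbar) + Θ = 1 := by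
  set d : Fin N → ℝ := fun i => max (ν - ((δ i) ^ 2)⁻¹) 0
  change Q = G * diagonal (fun i => (d i : ℂ)) * Gᴴ at hQ
  have hd0 (i) : 0 ≤ d i := le_max_right _ _
  have hpos (i) : 0 < 1 + δ i ^ 2 * d i := by have := hd0 i; positivity
  set c : Fin N → ℝ := fun i => 1 - ν * (δ i ^ 2 * (1 + δ i ^ 2 * d i)⁻¹) with hc
  have hcases (i) : 0 ≤ c i ∧ d i * c i = 0 := by
    have hi : 0 < δ i ^ 2 := pow_pos (hδ i) 2
    rcases le_total ν ((δ i ^ 2)⁻¹) with h | h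
    · have hdi : d i = 0 := max_eq_right (sub_nonpos.2 h)
      have hle : ν * δ i ^ 2 ≤ 1 := by
        simpa [inv_mul_cancel₀ hi.ne'] using mul_le_mul_of_nonneg_right h hi.le
      simp [hc, hdi, hle]
    · have hdi : d i = ν - (δ i ^ 2)⁻¹ := max_eq_left (sub_nonneg.2 h)
      have hν0 : 0 < ν := (inv_pos.2 hi).trans_le h
      have hsum : 1 + δ i ^ 2 * d i = ν * δ i ^ 2 := by
        rw [hdi, mul_sub, mul_inv_cancel₀ hi.ne']
        ring
      have hci : c i = 0 := by
        simp only [hc, hsum]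
        rw [← mul_assoc, mul_inv_cancel₀ (mul_pos hν0 hi).ne', sub_self]
      simp [hci]
  have hG' {k : ℕ} (X : Matrix (Fin N) (Fin k) ℂ) : Gᴴ * (G * X) = X := by
    rw [← Matrix.mul_assoc, hG, Matrix.one_mul]
  have hΔ : (diagonal fun i => (δ i : ℂ))ᴴ = diagonal fun i => (δ i : ℂ) := by
    rw [diagonal_conjTranspose]
    congr 1
    funext i
    simp
  have hHQH : Hbar * Q * Hbarᴴ = F * diagonal (fun i => ((δ i ^ 2 * d i : ℝ) : ℂ)) * Fᴴ := by
    have hdiag : diagonal (fun i => ((δ i ^ 2 * d i : ℝ) : ℂ)) = diagonal (fun i => (δ i : ℂ)) *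
        (diagonal (fun i => (d i : ℂ)) * diagonal (fun i => (δ i : ℂ))) := by
      simp only [diagonal_mul_diagonal]
      congr 1
      funext i
      push_cast
      ring
    rw [hdiag, hSVD, hQ]
    simp only [conjTranspose_mul, conjTranspose_conjTranspose, hΔ, Matrix.mul_assoc, hG']
  have hres : Fᴴ * (1 + Hbar * Q * Hbarᴴ)⁻¹ * F
      = diagonal fun i => (1 + ((δ i ^ 2 * d i : ℝ) : ℂ))⁻¹ := by
    rw [hHQH]
    exact conjTranspose_mul_inv_one_add_diagonal_mul hF fun i => by exact_mod_cast (hpos i).ne'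
  have hgrad : ν • (Hbarᴴ * (1 + Hbar * Q * Hbarᴴ)⁻¹ * Hbar)
      = G * diagonal (fun i => ((1 - c i : ℝ) : ℂ)) * Gᴴ := by
    have hdiag : diagonal (fun i => ((1 - c i : ℝ) : ℂ)) = ν • (diagonal (fun i => (δ i : ℂ)) *
        (Fᴴ * (1 + Hbar * Q * Hbarᴴ)⁻¹ * F) * diagonal (fun i => (δ i : ℂ))) := by
      rw [hres]
      simp only [diagonal_mul_diagonal, ← diagonal_smul]
      congr 1
      funext i
      simp only [hc, Pi.smul_apply, Complex.real_smul]
      push_cast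
      ring
    rw [hdiag]
    generalize (1 + Hbar * Q * Hbarᴴ)⁻¹ = R
    rw [hSVD]
    simp only [conjTranspose_mul, conjTranspose_conjTranspose, hΔ, Matrix.mul_assoc,
      Matrix.mul_smul, Matrix.smul_mul]
  refine ⟨(1 - G * Gᴴ) + G * diagonal (fun i => (c i : ℂ)) * Gᴴ, ?_, ?_, ?_⟩
  · refine (posSemidef_one_sub_mul_conjTranspose hG).add (PosSemidef.mul_mul_conjTranspose_same ?_ G)
    exact posSemidef_diagonal_iff.2 fun i => by exact_mod_cast (hcases i).1
  · have hdc : diagonal (fun i => (d i : ℂ)) * diagonal (fun i => (c i : ℂ)) = 0 := by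
      rw [diagonal_mul_diagonal, diagonal_eq_zero]
      funext i
      rw [Pi.zero_apply]
      exact_mod_cast (hcases i).2
    have hQΘ : Q * ((1 - G * Gᴴ) + G * diagonal (fun i => (c i : ℂ)) * Gᴴ)
        = G * (diagonal (fun i => (d i : ℂ)) * diagonal (fun i => (c i : ℂ))) * Gᴴ := by
      rw [hQ]
      simp only [Matrix.mul_add, Matrix.mul_sub, Matrix.mul_one, Matrix.mul_assoc, hG', sub_self,
        zero_add]
    rw [hQΘ, hdc, Matrix.mul_zero, Matrix.zero_mul, trace_zero]
  · have hdiag : diagonal (fun i => ((1 - c i : ℝ) : ℂ)) = 1 - diagonal (fun i => (c i : ℂ)) := by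
      rw [← diagonal_one, diagonal_sub]
      congr 1
      funext i
      push_cast
      rfl
    rw [hgrad, hdiag, Matrix.mul_sub, Matrix.sub_mul, Matrix.mul_one]
    abel
end
end

section
/- For any Hermitian positive semidefinite Σ_{1:L}, any l ∈ {1,…,L}, and any reals 0 ≤ β_1 ≤ β_2, the rate under uniformly scaled inputs is monotone: ℐ_l(β_1Σ_{1:L}, Φ) ≤ ℐ_l(β_2Σ_{1:L}, Φ), where β·Σ_{1:L} denotes (βΣ_1,…,βΣ_L); moreover the inequality is strict if β_1 < β_2 and H_{l,l} Σ_l H_{l,l}^† ≠ 0. -/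
open Matrix ComplexOrder

noncomputable section

namespace Matrix

variable {ι : Type*} [Fintype ι] [DecidableEq ι]

/-- The determinant of `1 + G` in terms of the eigenvalues of a Hermitian matrix `G`. -/
theorem IsHermitian.det_one_add_eq_prod {G : Matrix ι ι ℂ} (hG : G.IsHermitian) :
    (1 + G).det = ∏ i, (1 + (hG.eigenvalues i : ℂ)) := by
  have h := congrArg (Polynomial.eval (-1)) hG.charpoly_eq
  rw [eval_charpoly, Polynomial.eval_prod] at h
  have hneg : scalar ι (-1 : ℂ) - G = -(1 + G) := by
    rw [map_neg, map_one]; abel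
  have hprod : ∏ i, Polynomial.eval (-1 : ℂ) (Polynomial.X - Polynomial.C (hG.eigenvalues i : ℂ))
      = (-1) ^ Fintype.card ι * ∏ i, (1 + (hG.eigenvalues i : ℂ)) := by
    rw [← Finset.card_univ, ← Finset.prod_const, ← Finset.prod_mul_distrib]
    refine Finset.prod_congr rfl fun i _ => ?_
    simp only [Polynomial.eval_sub, Polynomial.eval_X, Polynomial.eval_C]
    ring
  rw [hneg, det_neg] at h
  exact mul_left_cancel₀ (pow_ne_zero _ (by norm_num)) (h.trans hprod)

theorem PosSemidef.one_le_det_one_add {G : Matrix ι ι ℂ} (hG : G.PosSemidef) :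
    1 ≤ (1 + G).det := by
  rw [hG.1.det_one_add_eq_prod]
  have h : 1 ≤ ∏ i, (1 + hG.1.eigenvalues i) :=
    Finset.prod_induction _ (1 ≤ ·) (fun _ _ => one_le_mul_of_one_le_of_one_le) le_rfl
      fun i _ => by linarith [hG.eigenvalues_nonneg i]
  exact_mod_cast h

theorem PosSemidef.one_lt_det_one_add {G : Matrix ι ι ℂ} (hG : G.PosSemidef) (h0 : G ≠ 0) :
    1 < (1 + G).det := by
  rw [hG.1.det_one_add_eq_prod]
  obtain ⟨i, hi⟩ : ∃ i, hG.1.eigenvalues i ≠ 0 := by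
    by_contra! h
    exact h0 (hG.1.eigenvalues_eq_zero_iff.mp (funext h))
  have hlt : ∏ _i : ι, (1 : ℝ) < ∏ i, (1 + hG.1.eigenvalues i) :=
    Finset.prod_lt_prod (fun _ _ => one_pos)
      (fun j _ => by linarith [hG.eigenvalues_nonneg j])
      ⟨i, Finset.mem_univ i, by linarith [(hG.eigenvalues_nonneg i).lt_of_ne' hi]⟩
  rw [Finset.prod_const_one] at hlt
  exact_mod_cast hlt

open scoped MatrixOrder in
theorem PosSemidef.exists_eq_conjTranspose_mul_self_s17 {B : Matrix ι ι ℂ} (hB : B.PosSemidef) :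
    ∃ R : Matrix ι ι ℂ, B = Rᴴ * R :=
  CStarAlgebra.nonneg_iff_eq_star_mul_self.mp hB.nonneg

theorem PosDef.det_add_conjTranspose_mul_self {P : Matrix ι ι ℂ} (hP : P.PosDef)
    (R : Matrix ι ι ℂ) : (P + Rᴴ * R).det = P.det * (1 + R * P⁻¹ * Rᴴ).det := by
  have hu : IsUnit P.det := (isUnit_iff_isUnit_det P).mp hP.isUnit
  rw [mul_assoc R, det_one_add_mul_comm, ← det_mul, mul_add, mul_one, ← mul_assoc, ← mul_assoc,
    mul_nonsing_inv P hu, one_mul]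

/-- Congruence of a positive definite matrix by a nonzero matrix is nonzero. -/
theorem PosDef.mul_mul_conjTranspose_ne_zero {K : Matrix ι ι ℂ} (hK : K.PosDef)
    {R : Matrix ι ι ℂ} (hR : R ≠ 0) : R * K * Rᴴ ≠ 0 := by
  intro h
  refine hR (conjTranspose_eq_zero.mp (ext_of_mulVec_single fun j => ?_))
  by_contra hv
  rw [zero_mulVec] at hv
  have hpos := hK.dotProduct_mulVec_pos hv
  rw [star_mulVec, conjTranspose_conjTranspose, ← dotProduct_mulVec, mulVec_mulVec,
    mulVec_mulVec, h] at hpos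
  simp at hpos

theorem PosDef.det_le_det_add {P E : Matrix ι ι ℂ} (hP : P.PosDef) (hE : E.PosSemidef) :
    P.det ≤ (P + E).det := by
  obtain ⟨R, rfl⟩ := hE.exists_eq_conjTranspose_mul_self_s17
  rw [hP.det_add_conjTranspose_mul_self]
  exact le_mul_of_one_le_right hP.det_pos.le
    (hP.inv.posSemidef.mul_mul_conjTranspose_same R).one_le_det_one_add

theorem PosDef.det_lt_det_add {P E : Matrix ι ι ℂ} (hP : P.PosDef) (hE : E.PosSemidef)
    (h0 : E ≠ 0) : P.det < (P + E).det := by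
  obtain ⟨R, rfl⟩ := hE.exists_eq_conjTranspose_mul_self_s17
  rw [hP.det_add_conjTranspose_mul_self]
  have hR : R ≠ 0 := by rintro rfl; simp at h0
  exact lt_mul_of_one_lt_right hP.det_pos
    ((hP.inv.posSemidef.mul_mul_conjTranspose_same R).one_lt_det_one_add
      (hP.inv.mul_mul_conjTranspose_ne_zero hR))

theorem PosSemidef.posDef_one_add_smul {κ : Type*} [DecidableEq κ] {A : Matrix κ κ ℂ}
    (hA : A.PosSemidef) {t : ℝ} (ht : 0 ≤ t) : (1 + t • A).PosDef :=
  PosDef.one.add_posSemidef (hA.smul ht)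

/-- Difference formula for the map `t ↦ t (1 + t A)⁻¹`. -/
theorem PosSemidef.smul_inv_sub_smul_inv {A : Matrix ι ι ℂ} (hA : A.PosSemidef) {s t : ℝ}
    (hs : 0 ≤ s) (ht : 0 ≤ t) :
    t • (1 + t • A)⁻¹ = s • (1 + s • A)⁻¹ + (t - s) • ((1 + s • A) * (1 + t • A))⁻¹ := by
  have hus := (isUnit_iff_isUnit_det _).mp (hA.posDef_one_add_smul hs).isUnit
  have hut := (isUnit_iff_isUnit_det _).mp (hA.posDef_one_add_smul ht).isUnit
  rw [mul_inv_rev]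
  set X := 1 + s • A with hX
  set Y := 1 + t • A with hY
  have key : t • X = s • Y + (t - s) • (1 : Matrix ι ι ℂ) := by
    rw [hX, hY]; module
  calc t • Y⁻¹ = Y⁻¹ * (t • X) * X⁻¹ := by
        rw [mul_assoc, smul_mul_assoc, mul_nonsing_inv X hus, mul_smul_comm, mul_one]
    _ = s • X⁻¹ + (t - s) • (Y⁻¹ * X⁻¹) := by
        rw [key, mul_add, add_mul, mul_smul_comm, nonsing_inv_mul Y hut, smul_mul_assoc, one_mul,
          mul_smul_comm, mul_one, smul_mul_assoc]

theorem PosSemidef.posDef_one_add_smul_mul {A : Matrix ι ι ℂ} (hA : A.PosSemidef) {s t : ℝ}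
    (hs : 0 ≤ s) (ht : 0 ≤ t) : ((1 + s • A) * (1 + t • A)).PosDef := by
  have h : (1 + s • A) * (1 + t • A) = 1 + ((s + t) • A + (s * t) • A ^ 2) := by
    rw [mul_add, mul_one, add_mul, one_mul, smul_mul_smul_comm, pow_two]
    module
  rw [h]
  exact PosDef.one.add_posSemidef
    ((hA.smul (add_nonneg hs ht)).add ((hA.pow 2).smul (mul_nonneg hs ht)))

/-- The log-determinant ratio of signal plus interference to interference. -/
theorem PosSemidef.log_det_sub_log_det {A : Matrix ι ι ℂ} (hA : A.PosSemidef)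
    (R : Matrix ι ι ℂ) {t : ℝ} (ht : 0 ≤ t) :
    Real.log (1 + t • A + t • (Rᴴ * R)).det.re - Real.log (1 + t • A).det.re =
      Real.log (1 + R * (t • (1 + t • A)⁻¹) * Rᴴ).det.re := by
  have hP := hA.posDef_one_add_smul ht
  have hM : (1 + R * (t • (1 + t • A)⁻¹) * Rᴴ).PosDef :=
    PosDef.one.add_posSemidef ((hP.inv.posSemidef.smul ht).mul_mul_conjTranspose_same R)
  have hdet : (1 + t • A + t • (Rᴴ * R)).det =
      (1 + t • A).det * (1 + R * (t • (1 + t • A)⁻¹) * Rᴴ).det := by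
    have hR : t • (Rᴴ * R) = (√t • R)ᴴ * (√t • R) := by
      rw [conjTranspose_smul, smul_mul_smul_comm, star_trivial, Real.mul_self_sqrt ht]
    have hG : (√t • R) * (1 + t • A)⁻¹ * (√t • R)ᴴ = R * (t • (1 + t • A)⁻¹) * Rᴴ := by
      rw [conjTranspose_smul, star_trivial, smul_mul_assoc, smul_mul_smul_comm,
        Real.mul_self_sqrt ht, mul_smul_comm, smul_mul_assoc]
    rw [hR, hP.det_add_conjTranspose_mul_self, hG]
  have h1 := Complex.pos_iff.mp hP.det_pos
  have h2 := Complex.pos_iff.mp hM.det_pos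
  rw [hdet, Complex.mul_re, ← h1.2, zero_mul, sub_zero, Real.log_mul h1.1.ne' h2.1.ne']
  ring

/-- Scaling signal and interference together does not decrease the log-determinant ratio, and
strictly increases it when the signal is nonzero. -/
theorem PosSemidef.log_det_sub_log_det_mono {A B : Matrix ι ι ℂ} (hA : A.PosSemidef)
    (hB : B.PosSemidef) {s t : ℝ} (hs : 0 ≤ s) (hst : s ≤ t) :
    Real.log (1 + s • A + s • B).det.re - Real.log (1 + s • A).det.re ≤
        Real.log (1 + t • A + t • B).det.re - Real.log (1 + t • A).det.re ∧
      (s < t → B ≠ 0 →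
        Real.log (1 + s • A + s • B).det.re - Real.log (1 + s • A).det.re <
          Real.log (1 + t • A + t • B).det.re - Real.log (1 + t • A).det.re) := by
  obtain ⟨R, rfl⟩ := hB.exists_eq_conjTranspose_mul_self_s17
  have ht := hs.trans hst
  rw [hA.log_det_sub_log_det R hs, hA.log_det_sub_log_det R ht, hA.smul_inv_sub_smul_inv hs ht,
    mul_add, add_mul, ← add_assoc]
  have hM : (1 + R * (s • (1 + s • A)⁻¹) * Rᴴ).PosDef :=
    PosDef.one.add_posSemidef
      (((hA.posDef_one_add_smul hs).inv.posSemidef.smul hs).mul_mul_conjTranspose_same R)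
  have hK := (hA.posDef_one_add_smul_mul hs ht).inv
  have hE := (hK.posSemidef.smul (sub_nonneg.mpr hst)).mul_mul_conjTranspose_same R
  have hpos := (Complex.pos_iff.mp hM.det_pos).1
  refine ⟨Real.log_le_log hpos (Complex.le_def.mp (hM.det_le_det_add hE)).1, fun hlt hB0 => ?_⟩
  have hR : R ≠ 0 := by rintro rfl; simp at hB0
  exact Real.log_lt_log hpos (Complex.lt_def.mp (hM.det_lt_det_add hE
    ((hK.smul (sub_pos.mpr hlt)).mul_mul_conjTranspose_ne_zero hR))).1

end Matrix

theorem bmacOmega_smul {L : ℕ} (m n : Fin L → ℕ)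
    (H : ∀ l k : Fin L, Matrix (Fin (n l)) (Fin (m k)) ℂ) (Φ : Fin L → Fin L → ℝ)
    (S : ∀ k : Fin L, Matrix (Fin (m k)) (Fin (m k)) ℂ) (l : Fin L) (β : ℝ) :
    bmacOmega m n H Φ (fun k => β • S k) l =
      1 + β • ∑ k : Fin L, Φ l k • (H l k * S k * (H l k)ᴴ) := by
  simp only [bmacOmega, Finset.smul_sum, Matrix.mul_smul, Matrix.smul_mul, smul_comm β]

/-- Monotonicity of the link rate under uniform scaling of all input
covariance matrices, with strictness when the direct signal is nonzero. -/
theorem stmt17 {L : ℕ} (hL : 1 ≤ L) (m n : Fin L → ℕ)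
    (H : ∀ l k : Fin L, Matrix (Fin (n l)) (Fin (m k)) ℂ)
    (Φ : Fin L → Fin L → ℝ)
    (hΦ : ∀ l k, Φ l k = 0 ∨ Φ l k = 1) (hΦd : ∀ l, Φ l l = 0)
    (S : ∀ k : Fin L, Matrix (Fin (m k)) (Fin (m k)) ℂ)
    (hS : ∀ k, (S k).PosSemidef)
    (l : Fin L) (β₁ β₂ : ℝ) (hβ₁ : 0 ≤ β₁) (hβ : β₁ ≤ β₂) :
    bmacRate m n H Φ (fun k => β₁ • S k) l
      ≤ bmacRate m n H Φ (fun k => β₂ • S k) l ∧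
    (β₁ < β₂ → H l l * S l * (H l l)ᴴ ≠ 0 →
      bmacRate m n H Φ (fun k => β₁ • S k) l
        < bmacRate m n H Φ (fun k => β₂ • S k) l) := by
  have hA : (∑ k : Fin L, Φ l k • (H l k * S k * (H l k)ᴴ)).PosSemidef :=
    posSemidef_sum _ fun k _ => ((hS k).mul_mul_conjTranspose_same (H l k)).smul
      (by rcases hΦ l k with h | h <;> simp [h])
  have hB := (hS l).mul_mul_conjTranspose_same (H l l)
  simp only [bmacRate, bmacOmega_smul, Matrix.mul_smul, Matrix.smul_mul]
  exact hA.log_det_sub_log_det_mono hB hβ₁ hβ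
end
end

section
/- Let w_1,…,w_L > 0 and μ > 0, and let Σ_{1:L} be Hermitian positive semidefinite. Define Ω_l = Ω_l(Σ), the dual covariances Σ̂_k = (w_k/μ)(Ω_k^{-1} − (Ω_k + H_{k,k}Σ_kH_{k,k}^†)^{-1}) (which are Hermitian positive semidefinite), and Ω̂_l = I + Σ_{k=1}^{L} Φ_{k,l} H_{k,l}^† Σ̂_k H_{k,l} (Hermitian positive definite). Suppose that for every l, Σ_l possesses the polite water-filling structure with water-filling level w_l/μ: there exist N_l ≥ 0, F_l ∈ ℂ^{n_l×N_l}, G_l ∈ ℂ^{m_l×N_l} with orthonormal columns and diagonal Δ_l ∈ ℝ^{N_l×N_l} with positive diagonal such that Ω_l^{-1/2} H_{l,l} Ω̂_l^{-1/2} = F_l Δ_l G_l^† and Ω̂_l^{1/2} Σ_l Ω̂_l^{1/2} = G_l ((w_l/μ) I − Δ_l^{-2})^+ G_l^†. Then Σ_{1:L} satisfies the KKT stationarity conditions of the weighted sum-rate maximization problem: for every l there exists a Hermitian positive semidefinite Θ_l ∈ ℂ^{m_l×m_l} with Tr(Σ_l Θ_l) = 0 such that μ Ω̂_l = w_l H_{l,l}^†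 (Ω_l + H_{l,l}Σ_lH_{l,l}^†)^{-1} H_{l,l} + Θ_l. -/
open Matrix ComplexOrder

noncomputable section

section WaterFilling

variable {ι κ ν : Type*} [Fintype ι] [DecidableEq ι] [Fintype κ] [DecidableEq κ]
  [Fintype ν] [DecidableEq ν]

/-- Woodbury identity for a diagonal perturbation of the identity along orthonormal columns. -/
theorem Matrix.inv_one_add_mul_diagonal_mul_conjTranspose {F : Matrix κ ν ℂ} (hF : Fᴴ * F = 1)
    {e : ν → ℂ} (he : ∀ i, 1 + e i ≠ 0) :
    (1 + F * diagonal e * Fᴴ)⁻¹ = 1 - F * diagonal (fun i => e i / (1 + e i)) * Fᴴ := by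
  apply Matrix.inv_eq_right_inv
  have hmul : F * diagonal e * Fᴴ * (F * diagonal (fun i => e i / (1 + e i)) * Fᴴ)
      = F * diagonal (fun i => e i * (e i / (1 + e i))) * Fᴴ := by
    rw [← diagonal_mul_diagonal]
    simp only [Matrix.mul_assoc]
    rw [← Matrix.mul_assoc Fᴴ F, hF, Matrix.one_mul]
  have hdiag : diagonal e = diagonal (fun i => e i / (1 + e i))
      + diagonal (fun i => e i * (e i / (1 + e i))) := by
    rw [diagonal_add]
    congr 1
    funext i
    have := he i
    field_simp
  rw [Matrix.add_mul, Matrix.mul_sub, Matrix.mul_sub, hmul]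
  rw [hdiag]
  simp only [Matrix.mul_add, Matrix.add_mul, Matrix.one_mul, Matrix.mul_one]
  abel

/-- The matrix `a • 1 - G C Gᴴ` with `G` having orthonormal columns and `C` a real diagonal matrix
with entries at most `a` is positive semidefinite. -/
theorem Matrix.posSemidef_smul_one_sub_mul_diagonal_mul_conjTranspose {G : Matrix ι ν ℂ}
    (hG : Gᴴ * G = 1) {a : ℝ} (ha : 0 ≤ a) {c : ν → ℝ} (hc : ∀ i, c i ≤ a) :
    (a • (1 : Matrix ι ι ℂ) - G * diagonal (fun i => (c i : ℂ)) * Gᴴ).PosSemidef := by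
  have hproj : (1 - G * Gᴴ)ᴴ * (1 - G * Gᴴ) = 1 - G * Gᴴ := by
    have : G * Gᴴ * (G * Gᴴ) = G * Gᴴ := by
      rw [Matrix.mul_assoc, ← Matrix.mul_assoc Gᴴ G, hG, Matrix.one_mul]
    simp [Matrix.sub_mul, Matrix.mul_sub, this]
  have hcompl : (1 - G * Gᴴ).PosSemidef := hproj ▸ posSemidef_conjTranspose_mul_self _
  have hdiag : (diagonal (fun i => ((a - c i : ℝ) : ℂ))).PosSemidef := by
    refine PosSemidef.diagonal fun i => ?_
    exact Complex.zero_le_real.2 (sub_nonneg.2 (hc i))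
  have hsum := (hcompl.smul ha).add (hdiag.mul_mul_conjTranspose_same G)
  convert hsum using 1
  have : diagonal (fun i => ((a - c i : ℝ) : ℂ))
      = a • (1 : Matrix ν ν ℂ) - diagonal (fun i => (c i : ℂ)) := by
    rw [← diagonal_one, ← diagonal_smul, diagonal_sub]
    congr 1
    funext i
    simp
  rw [this]
  simp only [Matrix.mul_sub, Matrix.sub_mul, smul_sub, Matrix.mul_smul, Matrix.smul_mul,
    Matrix.mul_one]
  abel

/-- The scalar content of water-filling: feasibility and complementary slackness. -/
theorem waterFilling_scalar {w μ d : ℝ} (hw : 0 < w) (hμ : 0 < μ) (hd : 0 < d) :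
    w * (d ^ 2 / (1 + d ^ 2 * max (w / μ - (d ^ 2)⁻¹) 0)) ≤ μ ∧
      max (w / μ - (d ^ 2)⁻¹) 0
        * (μ - w * (d ^ 2 / (1 + d ^ 2 * max (w / μ - (d ^ 2)⁻¹) 0))) = 0 := by
  rcases le_total (w / μ - (d ^ 2)⁻¹) 0 with h | h
  · rw [max_eq_right h]
    refine ⟨?_, by simp⟩
    have h' : w / μ ≤ 1 / d ^ 2 := by rw [one_div]; linarith
    rw [div_le_div_iff₀ hμ (by positivity)] at h'
    simpa using h'
  · rw [max_eq_left h]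
    have : w * (d ^ 2 / (1 + d ^ 2 * (w / μ - (d ^ 2)⁻¹))) = μ := by
      have : 1 + d ^ 2 * (w / μ - (d ^ 2)⁻¹) = d ^ 2 * w / μ := by
        field_simp
        ring
      rw [this]
      field_simp
    rw [this]
    simp

/-- Single-link form: a covariance with the water-filling structure at level `w / μ` satisfies the
KKT stationarity condition. Here `A` and `B` are the square roots of the forward and dual
interference-plus-noise covariances. -/
theorem exists_kkt_multiplier_of_waterFilling {w μ : ℝ} (hw : 0 < w) (hμ : 0 < μ)
    {A : Matrix κ κ ℂ} (hA : A.PosDef) {B : Matrix ι ι ℂ} (hB : B.PosDef)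
    {H : Matrix κ ι ℂ} {S : Matrix ι ι ℂ} {F : Matrix κ ν ℂ} {G : Matrix ι ν ℂ} {δ : ν → ℝ}
    (hδ : ∀ i, 0 < δ i) (hF : Fᴴ * F = 1) (hG : Gᴴ * G = 1)
    (hH : A⁻¹ * H * B⁻¹ = F * diagonal (fun i => (δ i : ℂ)) * Gᴴ)
    (hS : B * S * B
      = G * diagonal (fun i => ((max (w / μ - ((δ i) ^ 2)⁻¹) 0 : ℝ) : ℂ)) * Gᴴ) :
    ∃ Θ : Matrix ι ι ℂ, Θ.PosSemidef ∧ trace (S * Θ) = 0 ∧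
      μ • (B * B) = w • (Hᴴ * (A * A + H * S * Hᴴ)⁻¹ * H) + Θ := by
  have hAdet : IsUnit A.det := (Matrix.isUnit_iff_isUnit_det A).1 hA.isUnit
  have hBdet : IsUnit B.det := (Matrix.isUnit_iff_isUnit_det B).1 hB.isUnit
  have hAh : Aᴴ = A := hA.isHermitian
  have hBh : Bᴴ = B := hB.isHermitian
  set p : ν → ℝ := fun i => max (w / μ - ((δ i) ^ 2)⁻¹) 0 with hp
  have hp0 : ∀ i, 0 ≤ p i := fun i => le_max_right _ _
  set D : Matrix ν ν ℂ := diagonal (fun i => (δ i : ℂ)) with hD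
  set P : Matrix ν ν ℂ := diagonal (fun i => (p i : ℂ)) with hP
  set e : ν → ℂ := fun i => (δ i : ℂ) * p i * δ i with he
  have he1 : ∀ i, 1 + e i ≠ 0 := by
    intro i
    have : (0 : ℝ) < 1 + δ i * p i * δ i := by
      have := mul_nonneg (mul_nonneg (hδ i).le (hp0 i)) (hδ i).le
      linarith
    simp only [he]
    exact_mod_cast this.ne'
  set c : ν → ℝ := fun i => w * ((δ i) ^ 2 / (1 + (δ i) ^ 2 * p i)) with hc
  have hDh : Dᴴ = D := by
    simp [hD, diagonal_conjTranspose, Pi.star_def]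
  have hH' : H = A * F * D * Gᴴ * B := by
    have := congrArg (fun X => A * X * B) hH
    simpa [← Matrix.mul_assoc, mul_nonsing_inv A hAdet, nonsing_inv_mul_cancel_right B _ hBdet]
      using this
  have hHh : Hᴴ = B * G * D * Fᴴ * A := by
    rw [hH']
    simp [conjTranspose_mul, hAh, hBh, hDh, Matrix.mul_assoc]
  have hDPD : D * P * D = diagonal e := by
    simp [hD, hP, he, diagonal_mul_diagonal]
  have hHSH : H * S * Hᴴ = A * (F * diagonal e * Fᴴ) * A := by
    rw [hHh, hH', ← hDPD]
    calc _ = A * F * D * Gᴴ * (B * S * B) * G * D * Fᴴ * A := by simp only [Matrix.mul_assoc]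
      _ = A * F * D * (Gᴴ * G) * P * (Gᴴ * G) * D * Fᴴ * A := by
        rw [hS]; simp only [Matrix.mul_assoc]
      _ = _ := by rw [hG]; simp only [Matrix.mul_one, Matrix.mul_assoc]
  have hcov : A * A + H * S * Hᴴ = A * (1 + F * diagonal e * Fᴴ) * A := by
    rw [hHSH, Matrix.mul_add, Matrix.add_mul, Matrix.mul_one]
  have hgram : w • (Hᴴ * (A * A + H * S * Hᴴ)⁻¹ * H)
      = B * (G * diagonal (fun i => (c i : ℂ)) * Gᴴ) * B := by
    have hmid : Fᴴ * (1 - F * diagonal (fun i => e i / (1 + e i)) * Fᴴ) * F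
        = 1 - diagonal (fun i => e i / (1 + e i)) := by
      calc _ = Fᴴ * F - (Fᴴ * F) * diagonal (fun i => e i / (1 + e i)) * (Fᴴ * F) := by
            simp only [Matrix.mul_sub, Matrix.sub_mul, Matrix.mul_one, Matrix.mul_assoc]
        _ = _ := by rw [hF, Matrix.one_mul, Matrix.mul_one]
    have hcD : w • (D * (1 - diagonal (fun i => e i / (1 + e i))) * D)
        = diagonal (fun i => (c i : ℂ)) := by
      rw [hD, ← diagonal_one, diagonal_sub, diagonal_mul_diagonal, diagonal_mul_diagonal,
        ← diagonal_smul]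
      congr 1
      funext i
      have h1 := he1 i
      have h2 : (1 : ℂ) + (δ i : ℂ) ^ 2 * p i = 1 + e i := by simp only [he]; ring
      simp only [hc, Pi.smul_apply, Complex.real_smul]
      push_cast
      rw [h2]
      field_simp
      ring
    rw [hcov, hHh, Matrix.mul_inv_rev, Matrix.mul_inv_rev,
      inv_one_add_mul_diagonal_mul_conjTranspose hF he1, hH', ← hcD, ← hmid]
    set X := 1 - F * diagonal (fun i => e i / (1 + e i)) * Fᴴ
    calc _ = w • (B * G * D * Fᴴ * (A * A⁻¹) * X * (A⁻¹ * A) * F * D * Gᴴ * B) := by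
          simp only [Matrix.mul_assoc]
      _ = _ := by
        rw [mul_nonsing_inv A hAdet, nonsing_inv_mul A hAdet]
        simp only [Matrix.mul_one, Matrix.mul_assoc, Matrix.mul_smul, Matrix.smul_mul]
  set C : Matrix ν ν ℂ := diagonal (fun i => (c i : ℂ)) with hC
  have hslack : ∀ i, c i ≤ μ ∧ p i * (μ - c i) = 0 := fun i => waterFilling_scalar hw hμ (hδ i)
  refine ⟨B * (μ • 1 - G * C * Gᴴ) * B, ?_, ?_, ?_⟩
  · have := (posSemidef_smul_one_sub_mul_diagonal_mul_conjTranspose hG hμ.le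
      fun i => (hslack i).1).mul_mul_conjTranspose_same B
    rwa [hBh] at this
  · have hPC : μ • P - P * C = 0 := by
      rw [hP, hC, diagonal_mul_diagonal, ← diagonal_smul, diagonal_sub, diagonal_eq_zero]
      funext i
      have := (hslack i).2
      simp only [Pi.smul_apply, Complex.real_smul, Pi.zero_apply]
      norm_cast
      linarith
    calc trace (S * (B * (μ • 1 - G * C * Gᴴ) * B))
        = trace (B * S * B * (μ • 1 - G * C * Gᴴ)) := by
          rw [← Matrix.mul_assoc, trace_mul_comm]
          simp only [Matrix.mul_assoc]
      _ = trace (G * (μ • P - P * (Gᴴ * G) * C) * Gᴴ) := by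
          rw [hS]
          simp only [Matrix.mul_sub, Matrix.sub_mul, Matrix.mul_smul, Matrix.smul_mul,
            Matrix.mul_one, Matrix.mul_assoc]
      _ = 0 := by simp [hG, hPC]
  · rw [hgram]
    simp [Matrix.mul_sub, Matrix.sub_mul]

end WaterFilling

/-- If every input covariance possesses the polite water-filling structure
with water-filling level `w_l/μ`, then the input satisfies the KKT
stationarity conditions of the weighted sum-rate maximization problem. -/
theorem stmt18 {L : ℕ} (hL : 1 ≤ L) (m n : Fin L → ℕ)
    (H : ∀ l k : Fin L, Matrix (Fin (n l)) (Fin (m k)) ℂ)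
    (Φ : Fin L → Fin L → ℝ)
    (hΦ : ∀ l k, Φ l k = 0 ∨ Φ l k = 1) (hΦd : ∀ l, Φ l l = 0)
    (w : Fin L → ℝ) (hw : ∀ l, 0 < w l) (μ : ℝ) (hμ : 0 < μ)
    (S : ∀ k : Fin L, Matrix (Fin (m k)) (Fin (m k)) ℂ)
    (hS : ∀ k, (S k).PosSemidef)
    (Sh : ∀ k : Fin L, Matrix (Fin (n k)) (Fin (n k)) ℂ)
    (hSh : ∀ k, Sh k = (w k / μ) • ((bmacOmega m n H Φ S k)⁻¹
      - (bmacOmega m n H Φ S k + H k k * S k * (H k k)ᴴ)⁻¹))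
    (hShpsd : ∀ k, (Sh k).PosSemidef)
    (Ωh : ∀ l : Fin L, Matrix (Fin (m l)) (Fin (m l)) ℂ)
    (hΩh : ∀ l, Ωh l = 1 + ∑ k : Fin L, Φ k l • ((H k l)ᴴ * Sh k * H k l))
    (hΩhpd : ∀ l, (Ωh l).PosDef)
    (sqΩ : ∀ l : Fin L, Matrix (Fin (n l)) (Fin (n l)) ℂ)
    (hsqΩ : ∀ l, (sqΩ l).PosDef ∧ sqΩ l * sqΩ l = bmacOmega m n H Φ S l)
    (sqΩh : ∀ l : Fin L, Matrix (Fin (m l)) (Fin (m l)) ℂ)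
    (hsqΩh : ∀ l, (sqΩh l).PosDef ∧ sqΩh l * sqΩh l = Ωh l)
    (hpwf : ∀ l : Fin L, ∃ (N : ℕ) (F : Matrix (Fin (n l)) (Fin N) ℂ)
        (G : Matrix (Fin (m l)) (Fin N) ℂ) (δ : Fin N → ℝ),
      (∀ i, 0 < δ i) ∧ Fᴴ * F = 1 ∧ Gᴴ * G = 1 ∧
      (sqΩ l)⁻¹ * H l l * (sqΩh l)⁻¹
        = F * Matrix.diagonal (fun i => (δ i : ℂ)) * Gᴴ ∧
      sqΩh l * S l * sqΩh l
        = G * Matrix.diagonal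
            (fun i => ((max (w l / μ - ((δ i) ^ 2)⁻¹) 0 : ℝ) : ℂ)) * Gᴴ) :
    ∀ l : Fin L, ∃ Θ : Matrix (Fin (m l)) (Fin (m l)) ℂ, Θ.PosSemidef ∧
      Matrix.trace (S l * Θ) = 0 ∧
      μ • Ωh l = w l • ((H l l)ᴴ
          * (bmacOmega m n H Φ S l + H l l * S l * (H l l)ᴴ)⁻¹ * H l l) + Θ := by
  intro l
  obtain ⟨N, F, G, δ, hδ, hF, hG, hH, hSl⟩ := hpwf l
  rw [← (hsqΩ l).2, ← (hsqΩh l).2]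
  exact exists_kkt_multiplier_of_waterFilling (hw l) hμ (hsqΩ l).1 (hsqΩh l).1 hδ hF hG hH hSl
end
end
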